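/- arXiv:2108.13652 — 2 statements merged into one kernel-verified Lean document; each statement's English description precedes it below -/
import Mathlib

section
/- Let k be an algebraically closed field of characteristic 3, let g = sl_3(k) be the Lie algebra of traceless 3×3 matrices over k, let Z(g) be its center, and let L = g/Z(g) be the 7-dimensional quotient g-module with the action induced by the adjoint action. Then dim_k H^7(g, L) = 7. -/
/-! Chevalley–Eilenberg cohomology of a Lie algebra with coefficients in a module. -/

section ChevalleyEilenberg

variable (k : Type*) [Field k]
variable (g : Type*) [LieRing g] [LieAlgebra k g]
variable (M : Type*) [AddCommGroup M] [Module k M] [LieRingModule g M] [LieModule k g M]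

/-- The Chevalley–Eilenberg differential, as a raw function from alternating `n`-cochains
to `(n+1)`-ary functions:
`dψ(l₀,…,lₙ) = Σ_{i<j} (−1)^{i+j} ψ(⁅lᵢ,lⱼ⁆, …, l̂ᵢ, …, l̂ⱼ, …) + Σ_i (−1)^i ⁅lᵢ, ψ(…, l̂ᵢ, …)⁆`
(indices written from 0; this is the paper's formula with 1-based indices shifted by one). -/
def ceD : ∀ {n : ℕ}, (g [⋀^Fin n]→ₗ[k] M) → ((Fin (n + 1) → g) → M)
  | 0, ψ, v => ⁅v 0, ψ ![]⁆
  | (n + 1), ψ, v =>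
      (∑ i : Fin (n + 2), ∑ j : Fin (n + 2),
        if h : i < j then
          ((-1 : ℤ) ^ (i.val + j.val)) •
            ψ (Fin.cons ⁅v i, v j⁆
              (fun l => v (i.succAbove
                ((j.pred (Fin.pos_iff_ne_zero.mp (lt_of_le_of_lt i.zero_le h))).succAbove l))))
        else 0)
      + ∑ i : Fin (n + 2), ((-1 : ℤ) ^ i.val) • ⁅v i, ψ (fun l => v (i.succAbove l))⁆

variable {k g M}

private lemma dite_add_zero {P : Prop} [Decidable P] {N : Type*} [AddZeroClass N]
    (A B : P → N) :
    (dite P (fun h => A h + B h) fun _ => 0) =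
      (dite P A fun _ => 0) + (dite P B fun _ => 0) := by
  split_ifs <;> simp

private lemma dite_smul_zero {P : Prop} [Decidable P] {N : Type*} [AddCommGroup N] [Module k N]
    (c : k) (A : P → N) :
    (dite P (fun h => c • A h) fun _ => 0) = c • dite P A fun _ => 0 := by
  split_ifs <;> simp

lemma ceD_add {n : ℕ} (ψ φ : g [⋀^Fin n]→ₗ[k] M) (v : Fin (n + 1) → g) :
    ceD k g M (ψ + φ) v = ceD k g M ψ v + ceD k g M φ v := by
  cases n with
  | zero => simp [ceD]
  | succ n =>
    simp only [ceD, AlternatingMap.add_apply, smul_add, lie_add, dite_add_zero,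
      Finset.sum_add_distrib]
    abel

lemma ceD_smul {n : ℕ} (c : k) (ψ : g [⋀^Fin n]→ₗ[k] M) (v : Fin (n + 1) → g) :
    ceD k g M (c • ψ) v = c • ceD k g M ψ v := by
  cases n with
  | zero => simp [ceD]
  | succ n =>
    simp only [ceD, AlternatingMap.smul_apply, lie_smul, smul_comm _ c, dite_smul_zero,
      ← Finset.smul_sum, smul_add]

lemma ceD_zero {n : ℕ} (v : Fin (n + 1) → g) :
    ceD k g M (0 : g [⋀^Fin n]→ₗ[k] M) v = 0 := by
  cases n with
  | zero => simp [ceD]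
  | succ n => simp [ceD]

variable (k g M)

/-- The space of Chevalley–Eilenberg `n`-cocycles `Zⁿ(g, M)`. -/
def ceZ (n : ℕ) : Submodule k (g [⋀^Fin n]→ₗ[k] M) where
  carrier := {ψ | ∀ v, ceD k g M ψ v = 0}
  add_mem' := by
    intro ψ φ hψ hφ v
    rw [ceD_add, hψ v, hφ v, add_zero]
  zero_mem' := fun v => ceD_zero v
  smul_mem' := by
    intro c ψ hψ v
    rw [ceD_smul, hψ v, smul_zero]

/-- The space of Chevalley–Eilenberg `n`-coboundaries `Bⁿ(g, M)`: in positive degree, the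
alternating `n`-cochains that agree (as functions) with `dφ` for some `(n-1)`-cochain `φ`. -/
def ceB : (n : ℕ) → Submodule k (g [⋀^Fin n]→ₗ[k] M)
  | 0 => ⊥
  | (n + 1) =>
      { carrier := {ψ | ∃ φ : g [⋀^Fin n]→ₗ[k] M, ∀ v, ψ v = ceD k g M φ v}
        add_mem' := by
          rintro ψ χ ⟨φ₁, h₁⟩ ⟨φ₂, h₂⟩
          exact ⟨φ₁ + φ₂, fun v => by
            rw [AlternatingMap.add_apply, h₁ v, h₂ v, ceD_add]⟩
        zero_mem' := ⟨0, fun v => by rw [AlternatingMap.zero_apply, ceD_zero]⟩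
        smul_mem' := by
          rintro c ψ ⟨φ, h⟩
          exact ⟨c • φ, fun v => by rw [AlternatingMap.smul_apply, h v, ceD_smul]⟩ }

/-- The `n`-th Chevalley–Eilenberg cohomology space `Hⁿ(g, M)`: the quotient of the space of
`n`-cocycles by the space of `n`-coboundaries (viewed inside the cocycles). -/
abbrev ceH (n : ℕ) : Type _ :=
  ↥(ceZ k g M n) ⧸ (ceB k g M n).comap (ceZ k g M n).subtype

end ChevalleyEilenberg

/-- The Lie algebra `sl₃(k)` of traceless `3 × 3` matrices over `k`. -/
abbrev sl3 (k : Type*) [Field k] := ↥(LieAlgebra.SpecialLinear.sl (Fin 3) k)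

/-- The quotient `sl₃(k)/Z(sl₃(k))` of `sl₃(k)` by its center, as a module over `sl₃(k)`
via the action induced by the adjoint action. -/
abbrev sl3ModCenter (k : Type*) [Field k] := (sl3 k) ⧸ LieAlgebra.center k (sl3 k)

section Part1
variable {k : Type*} [Field k]
variable {g : Type*} [LieRing g] [LieAlgebra k g]
variable {M : Type*} [AddCommGroup M] [Module k M] [LieRingModule g M] [LieModule k g M]

open AlternatingMap in
/-- The bilinear map `(x, y) ↦ ι_{[x,y]} ψ`. -/
noncomputable def brContract {n : ℕ} (ψ : g [⋀^Fin (n + 1)]→ₗ[k] M) :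
    g →ₗ[k] g →ₗ[k] (g [⋀^Fin n]→ₗ[k] M) :=
  LinearMap.mk₂ k (fun x y => ψ.curryLeft ⁅x, y⁆)
    (by intros; simp) (by intros; simp) (by intros; simp) (by intros; simp)

/-- `x ↦ (v ↦ x · ψ v)`. -/
noncomputable def actContract {n : ℕ} (ψ : g [⋀^Fin n]→ₗ[k] M) :
    g →ₗ[k] (g [⋀^Fin n]→ₗ[k] M) where
  toFun x := (LieModule.toEnd k g M x).compAlternatingMap ψ
  map_add' x y := by ext v; simp
  map_smul' c x := by ext v; simp

lemma three_smul_zero [CharP k 3] {N : Type*} [AddCommGroup N] [Module k N] (x : N) :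
    x + x + x = 0 := by
  have h : (3 : k) = 0 := by exact_mod_cast CharP.cast_eq_zero k 3
  have : (3 : k) • x = x + x + x := by
    rw [show (3 : k) = 1 + 1 + 1 by norm_num, add_smul, add_smul, one_smul]
  rw [← this, h, zero_smul]

lemma ceD_triangle {n : ℕ} (ψ : g [⋀^Fin (n + 1)]→ₗ[k] M) (v : Fin (n + 2) → g) :
    ceD k g M ψ v = - (∑ i : Fin (n + 1), ∑ j ≥ i, (-1 : ℤ) ^ (i + j : ℕ) •
        ψ (Fin.cons ⁅v i.castSucc, v j.succ⁆ (j.removeNth <| i.castSucc.removeNth v)))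
      + ∑ i : Fin (n + 2), ((-1 : ℤ) ^ i.val) • ⁅v i, ψ (i.removeNth v)⁆ := by
  simp only [ceD]
  congr 1
  rw [Fin.sum_univ_castSucc]
  have h0 : ∀ j : Fin (n + 2), ¬ (Fin.last (n + 1) < j) := fun j => not_lt.mpr (Fin.le_last j)
  simp only [h0, dite_false, Finset.sum_const_zero, add_zero]
  rw [← Finset.sum_neg_distrib]
  refine Finset.sum_congr rfl fun i _ => ?_
  rw [Fin.sum_univ_succ]
  simp only [Fin.not_lt_zero, dite_false, zero_add]
  rw [← Finset.sum_neg_distrib]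
  have : (Finset.Ici i) = Finset.univ.filter (fun j => i ≤ j) := by ext; simp
  rw [this, Finset.sum_filter]
  refine Finset.sum_congr rfl fun j _ => ?_
  by_cases hij : i ≤ j
  · have h1 : i.castSucc < j.succ := Fin.castSucc_lt_succ_iff.mpr hij
    rw [dif_pos h1, if_pos hij]
    simp only [Fin.pred_succ, Fin.val_castSucc, Fin.val_succ]
    rw [← add_assoc, pow_succ, mul_neg_one, neg_smul]
    rfl
  · have h1 : ¬ i.castSucc < j.succ := fun h => hij (Fin.castSucc_lt_succ_iff.mp h)
    rw [dif_neg h1, if_neg hij]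

open AlternatingMap in
/-- In characteristic 3, the differential as an alternating map. -/
noncomputable def ceAlt {n : ℕ} (ψ : g [⋀^Fin (n + 1)]→ₗ[k] M) : g [⋀^Fin (n + 2)]→ₗ[k] M :=
  alternatizeUncurryFin (alternatizeUncurryFinLM ∘ₗ brContract ψ) +
    alternatizeUncurryFin (actContract ψ)

open AlternatingMap in
lemma ceAlt_apply [CharP k 3] {n : ℕ} (ψ : g [⋀^Fin (n + 1)]→ₗ[k] M) (v : Fin (n + 2) → g) :
    ceAlt ψ v = ceD k g M ψ v := by
  rw [ceD_triangle, ceAlt, AlternatingMap.add_apply,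
    alternatizeUncurryFin_alternatizeUncurryFinLM_comp_apply, alternatizeUncurryFin_apply]
  congr 1
  rw [← Finset.sum_neg_distrib]
  refine Finset.sum_congr rfl fun i _ => ?_
  rw [← Finset.sum_neg_distrib]
  refine Finset.sum_congr rfl fun j _ => ?_
  rw [← smul_neg]
  congr 1
  set r := j.removeNth (i.castSucc.removeNth v)
  have e1 : brContract ψ (v j.succ) (v i.castSucc) r = - ψ (Fin.cons ⁅v i.castSucc, v j.succ⁆ r) := by
    change ψ.curryLeft ⁅v j.succ, v i.castSucc⁆ r = - ψ.curryLeft ⁅v i.castSucc, v j.succ⁆ r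
    rw [← lie_skew, map_neg, AlternatingMap.neg_apply]
  have e2 : brContract ψ (v i.castSucc) (v j.succ) r = ψ (Fin.cons ⁅v i.castSucc, v j.succ⁆ r) := rfl
  rw [e1, e2, sub_neg_eq_add, eq_neg_iff_add_eq_zero]
  exact three_smul_zero (k := k) _

/-- Cartan's formula. -/
lemma ceD_cons {n : ℕ} (ψ : g [⋀^Fin (n + 2)]→ₗ[k] M) (x : g) (v : Fin (n + 2) → g) :
    ceD k g M ψ (Fin.cons x v) =
      ⁅x, ψ v⁆ - (∑ j, ψ (Function.update v j ⁅x, v j⁆)) - ceD k g M (ψ.curryLeft x) v := by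
  simp only [ceD]
  rw [Fin.sum_univ_succ, Fin.sum_univ_succ (n := n + 2)]
  rw [Fin.sum_univ_succ (n := n + 2)]
  simp only [lt_self_iff_false, dite_false, zero_add, Fin.cons_zero, Fin.cons_succ,
    Fin.succ_pos, dite_true, Fin.pred_succ, Fin.val_zero, Fin.val_succ, pow_zero, one_smul]
  have hA : ∀ j : Fin (n + 2), ((-1 : ℤ) ^ (j.val + 1)) • ψ (Fin.cons ⁅x, v j⁆ fun l =>
      (Fin.cons x v : Fin (n + 3) → g) ((0 : Fin (n + 3)).succAbove (j.succAbove l)))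
      = - ψ (Function.update v j ⁅x, v j⁆) := by
    intro j
    have : Function.update v j ⁅x, v j⁆ = j.insertNth ⁅x, v j⁆ (j.removeNth v) := by simp
    rw [this, ψ.map_insertNth, pow_succ, mul_neg_one, neg_smul]
    simp only [Fin.zero_succAbove, Fin.cons_succ]
    rfl
  have hB : ∀ i : Fin (n + 2), (fun l => (Fin.cons x v : Fin (n + 3) → g) (i.succ.succAbove l))
      = Fin.cons x (fun l => v (i.succAbove l)) := by
    intro i
    ext l
    refine Fin.cases ?_ (fun l => ?_) l
    · simp
    · simp
  have hS : ∀ (a : g) (r : Fin n → g), ψ (Fin.cons a (Fin.cons x r : Fin (n + 1) → g))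
      = - ψ (Fin.cons x (Fin.cons a r : Fin (n + 1) → g)) := by
    intro a r
    rw [← ψ.map_swap _ (i := 0) (j := 1) (by simp)]
    congr 1
    ext l
    refine Fin.cases ?_ (fun l => ?_) l
    · simp
    · refine Fin.cases ?_ (fun l => ?_) l
      · simp
      · have : Equiv.swap (0 : Fin (n + 2)) 1 l.succ.succ = l.succ.succ := by
          apply Equiv.swap_apply_of_ne_of_ne
          · exact Fin.succ_ne_zero _
          · intro h
            exact Fin.succ_ne_zero l (Fin.succ_injective _ (by simpa using h))
        simp [this]
  have hC : ∀ i j : Fin (n + 2), ∀ h : i < j,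
      ψ (Fin.cons ⁅v i, v j⁆ fun l =>
        (Fin.cons x v : Fin (n + 3) → g) (i.succ.succAbove (j.succAbove l)))
      = - ψ.curryLeft x (Fin.cons ⁅v i, v j⁆ fun l => v (i.succAbove
          ((j.pred (Fin.pos_iff_ne_zero.mp (lt_of_le_of_lt i.zero_le h))).succAbove l))) := by
    intro i j h
    have hj : j ≠ 0 := Fin.pos_iff_ne_zero.mp (lt_of_le_of_lt i.zero_le h)
    obtain ⟨j', rfl⟩ := Fin.exists_succ_eq.mpr hj
    have e : (fun l => (Fin.cons x v : Fin (n + 3) → g) (i.succ.succAbove (j'.succ.succAbove l)))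
        = (Fin.cons x (fun l => v (i.succAbove (j'.succAbove l))) : Fin (n + 1) → g) := by
      ext l
      refine Fin.cases ?_ (fun l => ?_) l
      · simp
      · simp
    rw [e, hS]
    simp only [Fin.pred_succ]
    rfl
  simp only [hB]
  have hD : ∀ i : Fin (n + 2), (∑ j : Fin (n + 3), if h : i.succ < j then
      ((-1 : ℤ) ^ (i.val + 1 + j.val)) • ψ (Fin.cons ⁅v i, (Fin.cons x v : Fin (n + 3) → g) j⁆
        fun l => (Fin.cons x v : Fin (n + 3) → g) (i.succ.succAbove ((j.pred
          (Fin.pos_iff_ne_zero.mp (lt_of_le_of_lt i.succ.zero_le h))).succAbove l))) else 0)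
      = - ∑ j : Fin (n + 2), if h : i < j then ((-1 : ℤ) ^ (i.val + j.val)) •
        ψ.curryLeft x (Fin.cons ⁅v i, v j⁆ fun l => v (i.succAbove
          ((j.pred (Fin.pos_iff_ne_zero.mp (lt_of_le_of_lt i.zero_le h))).succAbove l))) else 0 := by
    intro i
    rw [Fin.sum_univ_succ, dif_neg (by simp), zero_add, ← Finset.sum_neg_distrib]
    refine Finset.sum_congr rfl fun j _ => ?_
    by_cases h : i < j
    · rw [dif_pos h, dif_pos (Fin.succ_lt_succ_iff.mpr h)]
      simp only [Fin.cons_succ, Fin.pred_succ, Fin.val_succ]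
      rw [hC i j h, smul_neg, show i.val + 1 + (j.val + 1) = i.val + j.val + 2 by ring, pow_add]
      simp
    · rw [dif_neg h, dif_neg (fun h' => h (Fin.succ_lt_succ_iff.mp h')), neg_zero]
  have hE : ∀ i : Fin (n + 2), ((-1 : ℤ) ^ (i.val + 1)) • ⁅v i, ψ (Fin.cons x fun l => v (i.succAbove l))⁆
      = - (((-1 : ℤ) ^ i.val) • ⁅v i, ψ.curryLeft x fun l => v (i.succAbove l)⁆) := by
    intro i
    rw [pow_succ, mul_neg_one, neg_smul]
    rfl
  have hF : (fun l => (Fin.cons x v : Fin (n + 3) → g) ((0 : Fin (n + 3)).succAbove l)) = v := by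
    ext l; simp
  rw [Finset.sum_congr rfl (fun j _ => hA j), Finset.sum_congr rfl (fun i _ => hD i),
    Finset.sum_congr rfl (fun i _ => hE i), hF]
  simp only [Finset.sum_neg_distrib]
  abel
end Part1

section Part2
variable {k : Type*} [Field k]
variable {g : Type*} [LieRing g] [LieAlgebra k g]
variable {M : Type*} [AddCommGroup M] [Module k M] [LieRingModule g M] [LieModule k g M]

lemma alt_top_ext {n : ℕ} (e : Module.Basis (Fin n) k g) {A B : g [⋀^Fin n]→ₗ[k] M}
    (h : A e = B e) : A = B := by
  refine Module.Basis.ext_alternating e fun f hf => ?_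
  let σ : Equiv.Perm (Fin n) := Equiv.ofBijective f (Finite.injective_iff_bijective.1 hf)
  change A (e ∘ σ) = B (e ∘ σ)
  rw [AlternatingMap.map_perm, AlternatingMap.map_perm, h]

lemma det_update_self {n : ℕ} (e : Module.Basis (Fin n) k g) (j : Fin n) (y : g) :
    e.det (Function.update e j y) = e.repr y j := by
  conv_lhs => rw [← e.sum_repr y]
  rw [AlternatingMap.map_update_sum, Finset.sum_eq_single j]
  · rw [AlternatingMap.map_update_smul]
    simp [Module.Basis.det_self]
  · intro i _ hij
    rw [AlternatingMap.map_update_smul]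
    rw [AlternatingMap.map_eq_zero_of_eq (i := i) (j := j)]
    · simp
    · simp [hij]
    · exact hij
  · simp

/-- `vol ⊗ m`. -/
noncomputable def volM {n : ℕ} (e : Module.Basis (Fin n) k g) (m : M) : g [⋀^Fin n]→ₗ[k] M :=
  (LinearMap.toSpanSingleton k M m).compAlternatingMap e.det

@[simp] lemma volM_apply {n : ℕ} (e : Module.Basis (Fin n) k g) (m : M) (v : Fin n → g) :
    volM e m v = e.det v • m := by
  simp [volM]

variable [CharP k 3]

lemma ceD_volM {n : ℕ} (e : Module.Basis (Fin (n + 1)) k g) (m : M) (w : Fin (n + 2) → g) :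
    ceD k g M (volM e m) w = 0 := by
  rw [← ceAlt_apply]
  refine AlternatingMap.map_linearDependent _ _ fun h => ?_
  have := Module.Finite.of_basis e
  have h1 := h.fintype_card_le_finrank
  rw [Module.finrank_eq_card_basis e] at h1
  simp at h1

lemma ceD_volM1 {n : ℕ} (e : Module.Basis (Fin (n + 2)) k g)
    (htr : ∀ x : g, ∑ j, e.repr ⁅x, e j⁆ j = 0) (x : g) (m : M) (v : Fin (n + 2) → g) :
    ceD k g M ((volM e m).curryLeft x) v = e.det v • ⁅x, m⁆ := by
  have key : ∀ v, ceD k g M ((volM e m).curryLeft x) v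
      = e.det v • ⁅x, m⁆ - (∑ j, e.det (Function.update v j ⁅x, v j⁆)) • m := by
    intro v
    have h := ceD_cons (volM e m) x v
    rw [ceD_volM] at h
    rw [eq_comm, sub_eq_zero] at h
    rw [← h]
    simp [Finset.sum_smul]
  have : ceAlt ((volM e m).curryLeft x) = volM e ⁅x, m⁆ := by
    apply alt_top_ext e
    rw [ceAlt_apply, key]
    simp only [det_update_self, htr, zero_smul, sub_zero, volM_apply]
  rw [← ceAlt_apply, this, volM_apply]

lemma det_update_sum {n : ℕ} (e : Module.Basis (Fin (n + 2)) k g)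
    (htr : ∀ x : g, ∑ j, e.repr ⁅x, e j⁆ j = 0) (x : g) (m : M) (v : Fin (n + 2) → g) :
    (∑ j, e.det (Function.update v j ⁅x, v j⁆)) • m = 0 := by
  have h := ceD_cons (volM e m) x v
  rw [ceD_volM, ceD_volM1 e htr] at h
  simpa [Finset.sum_smul] using h

lemma ceD_volM2 {n : ℕ} (e : Module.Basis (Fin (n + 3)) k g)
    (htr : ∀ x : g, ∑ j, e.repr ⁅x, e j⁆ j = 0) (x y : g) (m : M) (v : Fin (n + 2) → g) :
    ceD k g M (((volM e m).curryLeft x).curryLeft y) v =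
      (volM e ⁅y, m⁆).curryLeft x v + (volM e m).curryLeft ⁅y, x⁆ v
        - (volM e ⁅x, m⁆).curryLeft y v := by
  have h := ceD_cons ((volM e m).curryLeft x) y v
  rw [ceD_volM1 e htr] at h
  have h2 := det_update_sum e htr y m (Fin.cons x v)
  rw [Fin.sum_univ_succ] at h2
  simp only [Fin.cons_zero, Fin.update_cons_zero, Fin.cons_succ, ← Fin.cons_update] at h2
  rw [add_smul, Finset.sum_smul] at h2
  simp only [AlternatingMap.curryLeft_apply_apply, volM_apply, Matrix.vecCons, lie_smul] at h ⊢
  rw [eq_sub_iff_add_eq] at h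
  rw [← eq_sub_iff_add_eq'] at h
  rw [h, eq_neg_of_add_eq_zero_left h2]
  abel

lemma ceAlt_volM2 {n : ℕ} (e : Module.Basis (Fin (n + 3)) k g)
    (htr : ∀ x : g, ∑ j, e.repr ⁅x, e j⁆ j = 0) (x y : g) (m : M) :
    ceAlt (((volM e m).curryLeft x).curryLeft y) =
      (volM e ⁅y, m⁆).curryLeft x + (volM e m).curryLeft ⁅y, x⁆
        - (volM e ⁅x, m⁆).curryLeft y := by
  ext v
  rw [ceAlt_apply, ceD_volM2 e htr]
  rfl

/-- The differential as a linear map. -/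
noncomputable def ceL (k g M : Type*) [Field k] [LieRing g] [LieAlgebra k g] [AddCommGroup M]
    [Module k M] [LieRingModule g M] [LieModule k g M] [CharP k 3] (n : ℕ) :
    (g [⋀^Fin (n + 1)]→ₗ[k] M) →ₗ[k] (g [⋀^Fin (n + 2)]→ₗ[k] M) where
  toFun := ceAlt
  map_add' ψ φ := by
    ext v; simp only [AlternatingMap.add_apply, ceAlt_apply, ceD_add]
  map_smul' c ψ := by
    ext v; simp only [AlternatingMap.smul_apply, ceAlt_apply, ceD_smul, RingHom.id_apply]

lemma ceL_apply {n : ℕ} (ψ : g [⋀^Fin (n + 1)]→ₗ[k] M) : ceL k g M n ψ = ceAlt ψ := rfl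

lemma mem_ceZ_iff {n : ℕ} (ψ : g [⋀^Fin (n + 1)]→ₗ[k] M) :
    ψ ∈ ceZ k g M (n + 1) ↔ ceL k g M n ψ = 0 := by
  constructor
  · intro h
    ext v
    rw [ceL_apply, ceAlt_apply]
    exact h v
  · intro h v
    rw [← ceAlt_apply, ← ceL_apply, h]
    rfl

lemma mem_ceB_iff {n : ℕ} (ψ : g [⋀^Fin (n + 2)]→ₗ[k] M) :
    ψ ∈ ceB k g M (n + 2) ↔ ∃ φ, ceL k g M n φ = ψ := by
  constructor
  · rintro ⟨φ, h⟩
    refine ⟨φ, ?_⟩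
    ext v
    rw [ceL_apply, ceAlt_apply]
    exact (h v).symm
  · rintro ⟨φ, rfl⟩
    exact ⟨φ, fun v => by rw [ceL_apply, ceAlt_apply]⟩

end Part2

section Part3
variable {k : Type*} [Field k]
variable {g : Type*} [AddCommGroup g] [Module k g]
variable {M : Type*} [AddCommGroup M] [Module k M]

lemma alt_sum_apply {ι : Type*} (s : Finset ι) {n : ℕ} (f : ι → g [⋀^Fin n]→ₗ[k] M)
    (v : Fin n → g) : (∑ i ∈ s, f i) v = ∑ i ∈ s, f i v := by
  classical
  induction s using Finset.induction_on with
  | empty => simp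
  | insert a s ha ih => rw [Finset.sum_insert ha, Finset.sum_insert ha, AlternatingMap.add_apply, ih]

open AlternatingMap in
/-- `e^i ∧ φ`. -/
noncomputable def wedge1 {d n : ℕ} (e : Module.Basis (Fin d) k g) (i : Fin d)
    (φ : g [⋀^Fin n]→ₗ[k] M) : g [⋀^Fin (n + 1)]→ₗ[k] M :=
  alternatizeUncurryFin ((e.coord i).smulRight φ)

open AlternatingMap in
lemma wedge1_apply {d n : ℕ} (e : Module.Basis (Fin d) k g) (i : Fin d)
    (φ : g [⋀^Fin n]→ₗ[k] M) (v : Fin (n + 1) → g) :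
    wedge1 e i φ v = ∑ j : Fin (n + 1), (-1 : ℤ) ^ (j : ℕ) • (e.repr (v j) i • φ (j.removeNth v)) := by
  rw [wedge1, alternatizeUncurryFin_apply]
  rfl

lemma contract_wedge {d n : ℕ} (e : Module.Basis (Fin d) k g) (φ : g [⋀^Fin (n + 1)]→ₗ[k] M) :
    ∑ i, (wedge1 e i φ).curryLeft (e i) = ((d : k) - ((n + 1 : ℕ) : k)) • φ := by
  ext v
  rw [alt_sum_apply, AlternatingMap.smul_apply, sub_smul]
  simp only [AlternatingMap.curryLeft_apply_apply, wedge1_apply]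
  simp only [Fin.sum_univ_succ (n := n + 1), Finset.sum_add_distrib]
  rw [sub_eq_add_neg]
  congr 1
  · have : ∀ i : Fin d, (-1 : ℤ) ^ ((0 : Fin (n + 2)) : ℕ) •
        (e.repr (Matrix.vecCons (e i) v 0) i • φ (Fin.removeNth 0 (Matrix.vecCons (e i) v))) = φ v := by
      intro i
      have h : Fin.removeNth 0 (Matrix.vecCons (e i) v) = v := by
        ext l; simp [Fin.removeNth]
      rw [h]
      simp
    rw [Finset.sum_congr rfl fun i _ => this i]
    simp [Nat.cast_smul_eq_nsmul]
  · rw [Finset.sum_comm]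
    have : ∀ j : Fin (n + 1), ∑ i : Fin d, (-1 : ℤ) ^ ((j.succ : Fin (n + 2)) : ℕ) •
        (e.repr (Matrix.vecCons (e i) v j.succ) i •
          φ (Fin.removeNth j.succ (Matrix.vecCons (e i) v))) = - φ v := by
      intro j
      have h : ∀ i, Fin.removeNth j.succ (Matrix.vecCons (e i) v)
          = Matrix.vecCons (e i) (j.removeNth v) := by
        intro i
        ext l
        refine Fin.cases ?_ (fun l => ?_) l
        · simp [Fin.removeNth]
        · simp [Fin.removeNth]
      simp only [h, Matrix.cons_val_succ]
      rw [← Finset.smul_sum]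
      have h2 : ∑ i, e.repr (v j) i • φ (Matrix.vecCons (e i) (j.removeNth v))
          = φ (Matrix.vecCons (v j) (j.removeNth v)) := by
        change ∑ i, e.repr (v j) i • (φ.curryLeft (e i)) (j.removeNth v)
          = φ.curryLeft (v j) (j.removeNth v)
        conv_rhs => rw [← e.sum_repr (v j)]
        rw [map_sum, alt_sum_apply]
        simp only [map_smul, AlternatingMap.smul_apply]
      rw [h2, Fin.val_succ, pow_succ, mul_neg_one, neg_smul, ← φ.map_insertNth]
      simp
    rw [Finset.sum_congr rfl fun j _ => this j]
    rw [Nat.cast_smul_eq_nsmul]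
    simp

end Part3


/-- Structure constants of `sl₃` in the basis `E₀₁, E₀₂, E₁₀, E₁₂, E₂₀, E₂₁, h₁, h₂`. -/
def scTab : List (List (List ℤ)) :=
  [[[0, 0, 0, 0, 0, 0, 0, 0], [0, 0, 0, 0, 0, 0, 0, 0], [0, 0, 0, 0, 0, 0, 1, 0], [0, 1, 0, 0, 0, 0, 0, 0], [0, 0, 0, 0, 0, -1, 0, 0], [0, 0, 0, 0, 0, 0, 0, 0], [-2, 0, 0, 0, 0, 0, 0, 0], [1, 0, 0, 0, 0, 0, 0, 0]],
   [[0, 0, 0, 0, 0, 0, 0, 0], [0, 0, 0, 0, 0, 0, 0, 0], [0, 0, 0, -1, 0, 0, 0, 0], [0, 0, 0, 0, 0, 0, 0, 0], [0, 0, 0, 0, 0, 0, 1, 1], [1, 0, 0, 0, 0, 0, 0, 0], [0, -1, 0, 0, 0, 0, 0, 0], [0, -1, 0, 0, 0, 0, 0, 0]],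
   [[0, 0, 0, 0, 0, 0, -1, 0], [0, 0, 0, 1, 0, 0, 0, 0], [0, 0, 0, 0, 0, 0, 0, 0], [0, 0, 0, 0, 0, 0, 0, 0], [0, 0, 0, 0, 0, 0, 0, 0], [0, 0, 0, 0, -1, 0, 0, 0], [0, 0, 2, 0, 0, 0, 0, 0], [0, 0, -1, 0, 0, 0, 0, 0]],
   [[0, -1, 0, 0, 0, 0, 0, 0], [0, 0, 0, 0, 0, 0, 0, 0], [0, 0, 0, 0, 0, 0, 0, 0], [0, 0, 0, 0, 0, 0, 0, 0], [0, 0, 1, 0, 0, 0, 0, 0], [0, 0, 0, 0, 0, 0, 0, 1], [0, 0, 0, 1, 0, 0, 0, 0], [0, 0, 0, -2, 0, 0, 0, 0]],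
   [[0, 0, 0, 0, 0, 1, 0, 0], [0, 0, 0, 0, 0, 0, -1, -1], [0, 0, 0, 0, 0, 0, 0, 0], [0, 0, -1, 0, 0, 0, 0, 0], [0, 0, 0, 0, 0, 0, 0, 0], [0, 0, 0, 0, 0, 0, 0, 0], [0, 0, 0, 0, 1, 0, 0, 0], [0, 0, 0, 0, 1, 0, 0, 0]],
   [[0, 0, 0, 0, 0, 0, 0, 0], [-1, 0, 0, 0, 0, 0, 0, 0], [0, 0, 0, 0, 1, 0, 0, 0], [0, 0, 0, 0, 0, 0, 0, -1], [0, 0, 0, 0, 0, 0, 0, 0], [0, 0, 0, 0, 0, 0, 0, 0], [0, 0, 0, 0, 0, -1, 0, 0], [0, 0, 0, 0, 0, 2, 0, 0]],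
   [[2, 0, 0, 0, 0, 0, 0, 0], [0, 1, 0, 0, 0, 0, 0, 0], [0, 0, -2, 0, 0, 0, 0, 0], [0, 0, 0, -1, 0, 0, 0, 0], [0, 0, 0, 0, -1, 0, 0, 0], [0, 0, 0, 0, 0, 1, 0, 0], [0, 0, 0, 0, 0, 0, 0, 0], [0, 0, 0, 0, 0, 0, 0, 0]],
   [[-1, 0, 0, 0, 0, 0, 0, 0], [0, 1, 0, 0, 0, 0, 0, 0], [0, 0, 1, 0, 0, 0, 0, 0], [0, 0, 0, 2, 0, 0, 0, 0], [0, 0, 0, 0, -1, 0, 0, 0], [0, 0, 0, 0, 0, -2, 0, 0], [0, 0, 0, 0, 0, 0, 0, 0], [0, 0, 0, 0, 0, 0, 0, 0]]]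

/-- Seven functionals on `g ⊗ M` that vanish on boundaries. -/
def lamTab : List (List (List ℤ)) :=
  [[[0, 1, 0, 0, 0, 0, 0], [-1, 0, 0, 0, 0, 0, 0], [0, 0, 0, 0, 0, 0, 0], [0, 0, 0, 0, 0, 0, 0], [0, 0, 0, 0, 0, 0, 0], [0, 0, 0, 0, 0, 0, 0], [0, 0, 0, 0, 0, 0, 0], [0, 0, 0, 0, 0, 0, 0]],
   [[0, 0, 0, 0, 0, 0, 0], [0, 0, 0, 1, 0, 0, 0], [0, 0, 0, 0, 0, 0, 0], [0, -1, 0, 0, 0, 0, 0], [0, 0, 0, 0, 0, 0, 0], [0, 0, 0, 0, 0, 0, 0], [0, 0, 0, 0, 0, 0, 0], [0, 0, 0, 0, 0, 0, 0]],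
   [[0, 0, 0, 0, 0, 0, 0], [0, 0, 0, 0, 0, 0, 0], [0, 0, 0, 1, 0, 0, 0], [0, 0, -1, 0, 0, 0, 0], [0, 0, 0, 0, 0, 0, 0], [0, 0, 0, 0, 0, 0, 0], [0, 0, 0, 0, 0, 0, 0], [0, 0, 0, 0, 0, 0, 0]],
   [[0, 0, 0, 0, 0, 0, 0], [0, 0, 0, 0, 0, 0, 0], [0, 0, 0, 0, 1, 0, 0], [0, 0, 0, 0, 0, 0, 0], [0, 0, -1, 0, 0, 0, 0], [0, 0, 0, 0, 0, 0, 0], [0, 0, 0, 0, 0, 0, 0], [0, 0, 0, 0, 0, 0, 0]],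
   [[0, 0, 0, 0, 0, 0, 0], [0, 0, 0, 0, 0, 0, 0], [0, 0, 0, 0, 0, 0, 0], [0, 0, 0, 0, 0, 0, 0], [0, 0, 0, 0, 0, 1, 0], [0, 0, 0, 0, -1, 0, 0], [0, 0, 0, 0, 0, 0, 0], [0, 0, 0, 0, 0, 0, 0]],
   [[0, 0, 0, 0, 0, -1, 0], [0, 0, 0, 0, 0, 0, 0], [0, 0, 0, 0, 0, 0, 0], [0, 0, 0, 0, 0, 0, 0], [0, 0, 0, 0, 0, 0, 0], [1, 0, 0, 0, 0, 0, 0], [0, 0, 0, 0, 0, 0, 0], [0, 0, 0, 0, 0, 0, 0]],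
   [[0, 0, 1, 0, 0, 0, 0], [0, 0, 0, 0, 1, 0, 0], [-1, 0, 0, 0, 0, 0, 0], [0, 0, 0, 0, 0, 0, 0], [0, -1, 0, 0, 0, 0, 0], [0, 0, 0, 0, 0, 0, 0], [0, 0, 0, 0, 0, 0, 0], [0, 0, 0, 0, 0, 0, 0]]]

/-- Seven dual cycles. -/
def zTab : List (List (List ℤ)) :=
  [[[0, 1, 0, 0, 0, 0, 0], [0, 0, 0, 0, 0, 0, 0], [0, 0, 0, 0, 0, 0, 0], [0, 0, 0, 0, 0, 0, 0], [0, 0, 0, 0, 0, 0, 0], [0, 0, 0, 0, 0, 0, 0], [0, 0, 0, 0, 0, 0, 0], [0, 0, 0, 0, 0, 0, 0]],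
   [[0, 0, 0, 0, 0, 0, 0], [0, 0, 0, 1, 0, 0, 0], [0, 0, 0, 0, 0, 0, 0], [0, 0, 0, 0, 0, 0, 0], [0, 0, 0, 0, 0, 0, 0], [0, 0, 0, 0, 0, 0, 0], [0, 0, 0, 0, 0, 0, 0], [0, 0, 0, 0, 0, 0, 0]],
   [[0, 0, 0, 0, 0, 0, 0], [0, 0, 0, 0, 0, 0, 0], [0, 0, 0, 1, 0, 0, 0], [0, 0, 0, 0, 0, 0, 0], [0, 0, 0, 0, 0, 0, 0], [0, 0, 0, 0, 0, 0, 0], [0, 0, 0, 0, 0, 0, 0], [0, 0, 0, 0, 0, 0, 0]],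
   [[0, 0, 0, 0, 0, 0, 0], [0, 0, 0, 0, 0, 0, 0], [0, 0, 0, 0, 1, 0, 0], [0, 0, 0, 0, 0, 0, 0], [0, 0, 0, 0, 0, 0, 0], [0, 0, 0, 0, 0, 0, 0], [0, 0, 0, 0, 0, 0, 0], [0, 0, 0, 0, 0, 0, 0]],
   [[0, 0, 0, 0, 0, 0, 0], [0, 0, 0, 0, 0, 0, 0], [0, 0, 0, 0, 0, 0, 0], [0, 0, 0, 0, 0, 0, 0], [0, 0, 0, 0, 0, 1, 0], [0, 0, 0, 0, 0, 0, 0], [0, 0, 0, 0, 0, 0, 0], [0, 0, 0, 0, 0, 0, 0]],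
   [[0, 0, 0, 0, 0, 0, 0], [0, 0, 0, 0, 0, 0, 0], [0, 0, 0, 0, 0, 0, 0], [0, 0, 0, 0, 0, 0, 0], [0, 0, 0, 0, 0, 0, 0], [1, 0, 0, 0, 0, 0, 0], [0, 0, 0, 0, 0, 0, 0], [0, 0, 0, 0, 0, 0, 0]],
   [[0, 0, 1, 0, 0, 0, 0], [0, 0, 0, 0, 0, 0, 0], [0, 0, 0, 0, 0, 0, 0], [0, 0, 0, 0, 0, 0, 0], [0, 0, 0, 0, 0, 0, 0], [0, 0, 0, 1, 0, 0, 0], [0, 0, 0, 0, 0, 0, 0], [0, 0, 0, 0, 0, 0, 0]]]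

/-- Lifts of the basis of `M` along `g ⊗ M → M`. -/
def tTab : List (List (List ℤ)) :=
  [[[0, 0, 0, 0, 0, 0, 0], [0, 0, 0, 0, 0, 0, 0], [0, 0, 0, 0, 0, 0, 0], [0, 0, 0, 0, 0, 0, 0], [0, 0, 0, 0, 0, 0, 0], [0, 0, 0, 0, 0, 0, 0], [0, 0, 0, 0, 0, 0, 0], [-1, 0, 0, 0, 0, 0, 0]],
   [[0, 0, 0, 1, 0, 0, 0], [0, 0, 0, 0, 0, 0, 0], [0, 0, 0, 0, 0, 0, 0], [0, 0, 0, 0, 0, 0, 0], [0, 0, 0, 0, 0, 0, 0], [0, 0, 0, 0, 0, 0, 0], [0, 0, 0, 0, 0, 0, 0], [0, 0, 0, 0, 0, 0, 0]],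
   [[0, 0, 0, 0, 0, 0, 0], [0, 0, 0, 0, 0, 0, 0], [0, 0, 0, 0, 0, 0, 0], [0, 0, 0, 0, 1, 0, 0], [0, 0, 0, 0, 0, 0, 0], [0, 0, 0, 0, 0, 0, 0], [0, 0, 0, 0, 0, 0, 0], [0, 0, 0, 0, 0, 0, 0]],
   [[0, 0, 0, 0, 0, 0, 0], [0, 0, 0, 0, 0, 0, 0], [0, 0, 0, 0, 0, 0, 0], [0, 0, 0, 0, 0, 0, 0], [0, 0, 0, 0, 0, 0, 0], [0, 0, 0, 0, 0, 0, 0], [0, 0, 0, -1, 0, 0, 0], [0, 0, 0, 0, 0, 0, 0]],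
   [[0, 0, 0, 0, 0, 0, 0], [0, 0, 0, 0, 0, 0, 0], [0, 0, 0, 0, 0, 0, 0], [0, 0, 0, 0, 0, 0, 0], [0, 0, 0, 0, 0, 0, 0], [0, 0, 1, 0, 0, 0, 0], [0, 0, 0, 0, 0, 0, 0], [0, 0, 0, 0, 0, 0, 0]],
   [[0, 0, 0, 0, 0, 0, 0], [0, 0, 0, 0, 0, 0, 0], [0, 0, 0, 0, 0, 0, 0], [0, 0, 0, 0, 0, 0, 0], [0, 0, 0, 0, 0, 0, 0], [0, 0, 0, 0, 0, 0, 0], [0, 0, 0, 0, 0, 1, 0], [0, 0, 0, 0, 0, 0, 0]],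
   [[0, 0, 0, 0, 0, 0, 0], [0, 0, 0, 0, 0, 0, 0], [0, 0, 0, 0, 0, 0, 0], [0, 0, 0, 0, 0, 0, 0], [0, 0, 0, 0, 0, 0, 0], [0, 0, 0, -1, 0, 0, 0], [0, 0, 0, 0, 0, 0, 0], [0, 0, 0, 0, 0, 0, 0]]]

/-- The contracting homotopy, in sparse form. -/
def hTab : List (List (List (Fin 8 × Fin 8 × Fin 7 × ℤ))) :=
  [[[(0, 7, 0, 1)], [], [], [], [(0, 6, 4, 1)], [(0, 4, 0, 1)], [(0, 5, 3, -1), (3, 5, 0, -1)]],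
   [[(1, 5, 1, -1)], [(0, 3, 1, -1)], [(1, 6, 2, -1)], [], [(0, 3, 4, -1), (3, 5, 6, -1), (3, 7, 5, 1)], [(1, 7, 5, -1)], [(1, 5, 3, -1)]],
   [[(2, 5, 1, -1), (0, 4, 3, -1)], [(2, 6, 1, -1)], [(2, 4, 3, -1)], [], [], [(2, 4, 0, 1), (0, 4, 2, 1)], [(2, 3, 5, 1)]],
   [[(3, 7, 0, 1), (0, 7, 3, 1)], [(1, 3, 6, 1)], [(3, 4, 3, -1)], [(1, 3, 2, 1)], [], [(3, 5, 6, -1), (3, 7, 5, 1)], [(3, 6, 6, -1)]],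
   [[(6, 7, 5, -1), (4, 7, 0, 1)], [(0, 4, 3, -1)], [(3, 4, 4, -1)], [(2, 5, 3, 1), (2, 3, 5, 1)], [(4, 6, 4, 1)], [], [(0, 4, 2, -1)]],
   [[], [(3, 5, 0, 1)], [], [], [(0, 4, 4, 1)], [(5, 7, 5, -1)], [(5, 7, 6, 1), (6, 7, 5, 1)]],
   [[(6, 7, 0, -1)], [(0, 6, 3, -1)], [(2, 6, 6, 1), (2, 3, 5, -1)], [], [(2, 6, 5, 1), (2, 4, 0, 1), (0, 4, 2, 1)], [], [(0, 6, 2, -1)]],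
   [[], [(0, 7, 3, -1)], [(6, 7, 2, -1), (2, 6, 6, 1), (2, 3, 5, -1)], [(6, 7, 3, 1)], [(3, 5, 4, -1)], [(6, 7, 5, -1)], [(3, 7, 5, -1)]]]

/-- Table lookup. -/
def tabGet (T : List (List (List ℤ))) (a b c : ℕ) : ℤ := ((T.getD a []).getD b []).getD c 0

/-- Structure constants of the Lie algebra. -/
def sc (a b c : Fin 8) : ℤ := tabGet scTab a b c
/-- Structure constants of the module. -/
def sm (a : Fin 8) (j l : Fin 7) : ℤ := tabGet scTab a j l + if l.val = 6 then tabGet scTab a j 7 else 0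
/-- The functionals. -/
def lam (t : Fin 7) (i : Fin 8) (j : Fin 7) : ℤ := tabGet lamTab t i j
/-- The cycles. -/
def zc (t : Fin 7) (i : Fin 8) (j : Fin 7) : ℤ := tabGet zTab t i j
/-- The lifts. -/
def tc (t : Fin 7) (i : Fin 8) (j : Fin 7) : ℤ := tabGet tTab t i j
/-- The boundary of `e_b ∧ e_a ⊗ m_l`. -/
def rel (a b : Fin 8) (l : Fin 7) (i : Fin 8) (j : Fin 7) : ℤ :=
  (if i = a then sm b l j else 0) + (if j = l then sc b a i else 0) - (if i = b then sm a l j else 0)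
/-- The homotopy. -/
def hc (i : Fin 8) (j : Fin 7) : List (Fin 8 × Fin 8 × Fin 7 × ℤ) := (hTab.getD i []).getD j []

lemma num_tr : ∀ a : Fin 8, ∑ j, sc a j j = 0 := by
  simp only [Fin.sum_univ_eight, Fin.sum_univ_seven]; decide +kernel

lemma num_lam : ∀ (t : Fin 7) (a b : Fin 8) (l : Fin 7),
    (3 : ℤ) ∣ ∑ j, lam t a j * sm b l j + ∑ i, lam t i l * sc b a i
      - ∑ j, lam t b j * sm a l j := by
  simp only [Fin.sum_univ_eight, Fin.sum_univ_seven]; decide +kernel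

lemma num_z : ∀ t l : Fin 7, (3 : ℤ) ∣ ∑ i, ∑ j, zc t i j * sm i j l := by
  simp only [Fin.sum_univ_eight, Fin.sum_univ_seven]; decide +kernel

lemma num_zlam : ∀ t s : Fin 7, (3 : ℤ) ∣ (∑ i, ∑ j, lam s i j * zc t i j) - if s = t then 1 else 0 := by
  simp only [Fin.sum_univ_eight, Fin.sum_univ_seven]; decide +kernel

lemma num_h : ∀ (i : Fin 8) (j : Fin 7) (i' : Fin 8) (j' : Fin 7),
    (3 : ℤ) ∣ ((hc i j).map fun q => q.2.2.2 * rel q.1 q.2.1 q.2.2.1 i' j').sum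
      + ∑ l, sm i j l * tc l i' j' + ∑ t, lam t i j * zc t i' j'
      - if i = i' ∧ j = j' then 1 else 0 := by
  simp only [Fin.sum_univ_eight, Fin.sum_univ_seven]; decide +kernel

section Part4
variable {k : Type*} [Field k]
variable {g : Type*} [LieRing g] [LieAlgebra k g]
variable {M : Type*} [AddCommGroup M] [Module k M] [LieRingModule g M] [LieModule k g M]

/-- Coordinates of a 7-cochain. -/
noncomputable def E1 (e : Module.Basis (Fin 8) k g) (m : Module.Basis (Fin 7) k M) :
    (g [⋀^Fin 7]→ₗ[k] M) →ₗ[k] (Fin 8 → Fin 7 → k) where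
  toFun ψ i j := m.repr ((-1 : ℤ) ^ (i : ℕ) • ψ (i.removeNth e)) j
  map_add' ψ φ := by ext i j; simp
  map_smul' c ψ := by ext i j; simp [smul_comm _ c]

lemma E1_apply (e : Module.Basis (Fin 8) k g) (m : Module.Basis (Fin 7) k M)
    (ψ : g [⋀^Fin 7]→ₗ[k] M) (i : Fin 8) (j : Fin 7) :
    E1 e m ψ i j = m.repr ((-1 : ℤ) ^ (i : ℕ) • ψ (i.removeNth e)) j := rfl

lemma wedge1_basis (e : Module.Basis (Fin 8) k g) (ψ : g [⋀^Fin 7]→ₗ[k] M) (i : Fin 8) :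
    wedge1 e i ψ e = (-1 : ℤ) ^ (i : ℕ) • ψ (i.removeNth e) := by
  rw [wedge1_apply, Finset.sum_eq_single i]
  · simp
  · intro j _ hj
    simp [hj]
  · simp

lemma E1_injective (e : Module.Basis (Fin 8) k g) (m : Module.Basis (Fin 7) k M) :
    Function.Injective (E1 e m) := by
  rw [injective_iff_map_eq_zero]
  intro ψ h
  have h1 : ∀ i, wedge1 e i ψ = 0 := by
    intro i
    apply alt_top_ext e
    rw [wedge1_basis]
    apply m.repr.injective
    ext j
    rw [← E1_apply, h]
    simp
  have h2 := contract_wedge e ψ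
  simp only [h1] at h2
  have h3 : (((8 : ℕ) : k) - ((6 + 1 : ℕ) : k)) = 1 := by push_cast; ring
  rw [h3, one_smul] at h2
  rw [← h2]
  exact Finset.sum_const_zero

lemma E1_vol (e : Module.Basis (Fin 8) k g) (m : Module.Basis (Fin 7) k M) (x : g) (y : M)
    (i : Fin 8) (j : Fin 7) :
    E1 e m ((volM e y).curryLeft x) i j = e.repr x i * m.repr y j := by
  have h := (volM e y).map_insertNth i x (i.removeNth e)
  rw [E1_apply, AlternatingMap.curryLeft_apply_apply, ← h]
  have : i.insertNth x (i.removeNth e) = Function.update e i x := by simp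
  rw [this, volM_apply, det_update_self]
  simp

/-- The cochain with given coordinates. -/
noncomputable def J1 (e : Module.Basis (Fin 8) k g) (m : Module.Basis (Fin 7) k M)
    (w : Fin 8 → Fin 7 → k) : g [⋀^Fin 7]→ₗ[k] M :=
  ∑ i, ∑ j, w i j • (volM e (m j)).curryLeft (e i)

lemma E1_J1 (e : Module.Basis (Fin 8) k g) (m : Module.Basis (Fin 7) k M)
    (w : Fin 8 → Fin 7 → k) : E1 e m (J1 e m w) = w := by
  ext i j
  simp only [J1, map_sum, map_smul, Finset.sum_apply, Pi.smul_apply, E1_vol, smul_eq_mul]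
  rw [Finset.sum_eq_single i, Finset.sum_eq_single j]
  · simp
  · intro b _ hb
    simp [hb]
  · simp
  · intro b _ hb
    simp [hb]
  · simp

lemma J1_E1 (e : Module.Basis (Fin 8) k g) (m : Module.Basis (Fin 7) k M)
    (ψ : g [⋀^Fin 7]→ₗ[k] M) : J1 e m (E1 e m ψ) = ψ :=
  E1_injective e m (E1_J1 e m _)

variable [CharP k 3]

lemma cast_zero_of_dvd {x : ℤ} (h : (3 : ℤ) ∣ x) : (x : k) = 0 := by
  exact (CharP.intCast_eq_zero_iff k 3 x).mpr h

lemma tr_zero (e : Module.Basis (Fin 8) k g)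
    (hsc : ∀ a b c, e.repr ⁅e a, e b⁆ c = (sc a b c : k)) (x : g) :
    ∑ j, e.repr ⁅x, e j⁆ j = 0 := by
  have h1 : ∀ a, ∑ j, e.repr ⁅e a, e j⁆ j = 0 := by
    intro a
    simp only [hsc]
    exact_mod_cast congrArg (Int.cast : ℤ → k) (num_tr a)
  conv_lhs => rw [← e.sum_repr x]
  simp only [sum_lie, smul_lie, map_sum, map_smul, Finsupp.coe_finsetSum, Finset.sum_apply,
    Finsupp.smul_apply]
  rw [Finset.sum_comm]
  simp only [← Finset.smul_sum, h1, smul_zero, Finset.sum_const_zero]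

lemma ceL_J1 (e : Module.Basis (Fin 8) k g) (m : Module.Basis (Fin 7) k M)
    (hsc : ∀ a b c, e.repr ⁅e a, e b⁆ c = (sc a b c : k))
    (hsm : ∀ a j l, m.repr ⁅e a, m j⁆ l = (sm a j l : k)) (w : Fin 8 → Fin 7 → k) :
    ceL k g M 6 (J1 e m w) = 0 ↔ ∀ l, ∑ i, ∑ j, w i j * (sm i j l : k) = 0 := by
  have h1 : ∀ i j, ceL k g M 6 ((volM e (m j)).curryLeft (e i)) = volM e ⁅e i, m j⁆ := by
    intro i j
    ext v
    rw [ceL_apply, ceAlt_apply, ceD_volM1 e (tr_zero e hsc), volM_apply]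
  have h2 : ceL k g M 6 (J1 e m w) = volM e (∑ i, ∑ j, w i j • ⁅e i, m j⁆) := by
    simp only [J1, map_sum, map_smul, h1]
    ext v
    simp only [alt_sum_apply, AlternatingMap.smul_apply, volM_apply, Finset.smul_sum,
      smul_comm (e.det v)]
  have h3 : ∀ l, m.repr (∑ i, ∑ j, w i j • ⁅e i, m j⁆) l = ∑ i, ∑ j, w i j * (sm i j l : k) := by
    intro l
    simp [hsm]
  rw [h2]
  constructor
  · intro h l
    rw [← h3]
    have := congrArg (fun A : g [⋀^Fin 8]→ₗ[k] M => A e) h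
    simp only [volM_apply, Module.Basis.det_self, one_smul] at this
    rw [this]; simp
  · intro h
    have : (∑ i, ∑ j, w i j • ⁅e i, m j⁆) = 0 := by
      apply m.repr.injective
      ext l
      rw [h3, h]; simp
    rw [this]
    ext v
    simp

lemma E1_rel (e : Module.Basis (Fin 8) k g) (m : Module.Basis (Fin 7) k M)
    (hsc : ∀ a b c, e.repr ⁅e a, e b⁆ c = (sc a b c : k))
    (hsm : ∀ a j l, m.repr ⁅e a, m j⁆ l = (sm a j l : k)) (a b : Fin 8) (l : Fin 7) :
    E1 e m (ceL k g M 5 (((volM e (m l)).curryLeft (e a)).curryLeft (e b)))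
      = fun i j => (rel a b l i j : k) := by
  rw [ceL_apply, ceAlt_volM2 e (tr_zero e hsc), map_sub, map_add]
  ext i j
  change E1 e m ((volM e ⁅e b, m l⁆).curryLeft (e a)) i j
    + E1 e m ((volM e (m l)).curryLeft ⁅e b, e a⁆) i j
    - E1 e m ((volM e ⁅e a, m l⁆).curryLeft (e b)) i j = _
  simp only [E1_vol, hsc, hsm, rel, Module.Basis.repr_self, Finsupp.single_apply]
  push_cast
  simp only [eq_comm (a := i), eq_comm (a := j)]
  simp

/-- The functionals on 7-cochains. -/
noncomputable def Lam (e : Module.Basis (Fin 8) k g) (m : Module.Basis (Fin 7) k M) :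
    (g [⋀^Fin 7]→ₗ[k] M) →ₗ[k] (Fin 7 → k) where
  toFun ψ t := ∑ i, ∑ j, (lam t i j : k) * E1 e m ψ i j
  map_add' ψ φ := by ext t; simp [mul_add, Finset.sum_add_distrib]
  map_smul' c ψ := by ext t; simp [mul_left_comm _ c, Finset.mul_sum]

lemma Lam_apply (e : Module.Basis (Fin 8) k g) (m : Module.Basis (Fin 7) k M)
    (ψ : g [⋀^Fin 7]→ₗ[k] M) (t : Fin 7) :
    Lam e m ψ t = ∑ i, ∑ j, (lam t i j : k) * E1 e m ψ i j := rfl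

lemma num_lam_rel (t : Fin 7) (a b : Fin 8) (l : Fin 7) :
    (3 : ℤ) ∣ ∑ i, ∑ j, lam t i j * rel a b l i j := by
  have h := num_lam t a b l
  have : ∑ i, ∑ j, lam t i j * rel a b l i j = ∑ j, lam t a j * sm b l j
      + ∑ i, lam t i l * sc b a i - ∑ j, lam t b j * sm a l j := by
    simp only [rel, mul_sub, mul_add, Finset.sum_sub_distrib, Finset.sum_add_distrib, mul_ite,
      mul_zero]
    congr 1
    · congr 1
      · rw [Finset.sum_comm]; simp
      · simp
    · rw [Finset.sum_comm]; simp
  rw [this]; exact h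

lemma Lam_rel (e : Module.Basis (Fin 8) k g) (m : Module.Basis (Fin 7) k M)
    (hsc : ∀ a b c, e.repr ⁅e a, e b⁆ c = (sc a b c : k))
    (hsm : ∀ a j l, m.repr ⁅e a, m j⁆ l = (sm a j l : k)) (a b : Fin 8) (l : Fin 7) :
    Lam e m (ceL k g M 5 (((volM e (m l)).curryLeft (e a)).curryLeft (e b))) = 0 := by
  ext t
  rw [Lam_apply, E1_rel e m hsc hsm]
  have := cast_zero_of_dvd (k := k) (num_lam_rel t a b l)
  push_cast at this
  exact this

lemma Lam_bdry (e : Module.Basis (Fin 8) k g) (m : Module.Basis (Fin 7) k M)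
    (hsc : ∀ a b c, e.repr ⁅e a, e b⁆ c = (sc a b c : k))
    (hsm : ∀ a j l, m.repr ⁅e a, m j⁆ l = (sm a j l : k)) (φ : g [⋀^Fin 6]→ₗ[k] M) :
    Lam e m (ceL k g M 5 φ) = 0 := by
  have h1 : ∀ (θ : g [⋀^Fin 7]→ₗ[k] M) (b : Fin 8),
      Lam e m (ceL k g M 5 (θ.curryLeft (e b))) = 0 := by
    intro θ b
    rw [← J1_E1 e m θ, J1]
    generalize E1 e m θ = w
    have : (∑ i, ∑ j, w i j • (volM e (m j)).curryLeft (e i)).curryLeft (e b)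
        = ∑ i, ∑ j, w i j • ((volM e (m j)).curryLeft (e i)).curryLeft (e b) := by
      ext v
      simp only [AlternatingMap.curryLeft_apply_apply, alt_sum_apply, AlternatingMap.smul_apply]
    rw [this]
    simp only [map_sum, map_smul, Lam_rel e m hsc hsm, smul_zero, Finset.sum_const_zero]
  have h2 := contract_wedge e φ
  have h3 : (((8 : ℕ) : k) - ((5 + 1 : ℕ) : k)) = -1 := by
    have h : (3 : k) = 0 := by exact_mod_cast CharP.cast_eq_zero k 3
    push_cast; linear_combination h
  rw [h3, neg_one_smul] at h2
  have h4 : φ = - ∑ i, (wedge1 e i φ).curryLeft (e i) := by rw [h2, neg_neg]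
  rw [h4]
  simp only [map_neg, map_sum, h1, Finset.sum_const_zero, neg_zero]

lemma list_sum_apply (L : List (Fin 8 × Fin 8 × Fin 7 × ℤ)) (i' : Fin 8) (j' : Fin 7) :
    (((L.map fun q => q.2.2.2 * rel q.1 q.2.1 q.2.2.1 i' j').sum : ℤ) : k)
      = (L.map fun q => (fun i j => (q.2.2.2 : k) * (rel q.1 q.2.1 q.2.2.1 i j : k) :
          Fin 8 → Fin 7 → k)).sum i' j' := by
  induction L with
  | nil => simp
  | cons q L ih => simp [← ih]

lemma exact_part (e : Module.Basis (Fin 8) k g) (m : Module.Basis (Fin 7) k M)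
    (hsc : ∀ a b c, e.repr ⁅e a, e b⁆ c = (sc a b c : k))
    (hsm : ∀ a j l, m.repr ⁅e a, m j⁆ l = (sm a j l : k)) (ψ : g [⋀^Fin 7]→ₗ[k] M)
    (h0 : ceL k g M 6 ψ = 0) (h1 : Lam e m ψ = 0) : ∃ φ, ceL k g M 5 φ = ψ := by
  rw [← J1_E1 e m ψ, ceL_J1 e m hsc hsm] at h0
  have h1' : ∀ t, ∑ i, ∑ j, (lam t i j : k) * E1 e m ψ i j = 0 := fun t => by
    rw [← Lam_apply, h1]; rfl
  let R : Fin 8 → Fin 7 → Fin 8 → Fin 7 → k := fun i j =>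
    ((hc i j).map fun q => (fun i j => (q.2.2.2 : k) * (rel q.1 q.2.1 q.2.2.1 i j : k) :
          Fin 8 → Fin 7 → k)).sum
  let P : Submodule k (Fin 8 → Fin 7 → k) :=
    LinearMap.range ((E1 e m).comp (ceL k g M 5))
  have hR : ∀ i j, R i j ∈ P := by
    intro i j
    refine list_sum_mem ?_
    intro x hx
    obtain ⟨q, _, rfl⟩ := List.mem_map.mp hx
    have : (fun i j => (q.2.2.2 : k) * (rel q.1 q.2.1 q.2.2.1 i j : k) : Fin 8 → Fin 7 → k)
      = (q.2.2.2 : k) • (fun i j => (rel q.1 q.2.1 q.2.2.1 i j : k)) := rfl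
    rw [this, ← E1_rel e m hsc hsm]
    exact P.smul_mem _ ⟨_, rfl⟩
  generalize hw : E1 e m ψ = w at h0 h1'
  have key : w = ∑ i, ∑ j, w i j • R i j := by
    ext i' j'
    have hn : ∀ i j, R i j i' j' + ∑ l, (sm i j l : k) * tc l i' j' +
        ∑ t, (lam t i j : k) * zc t i' j' = if i = i' ∧ j = j' then 1 else 0 := by
      intro i j
      have := cast_zero_of_dvd (k := k) (num_h i j i' j')
      rw [Int.cast_sub, Int.cast_add, Int.cast_add, list_sum_apply, sub_eq_zero] at this
      push_cast at this
      exact this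
    have e1 : w i' j' = ∑ i, ∑ j, w i j * (if i = i' ∧ j = j' then 1 else 0) := by
      rw [Finset.sum_eq_single i', Finset.sum_eq_single j']
      · simp
      · intro b _ hb; simp [hb]
      · simp
      · intro b _ hb; simp [hb]
      · simp
    have e2 : ∑ i, ∑ j, w i j * ∑ l, (sm i j l : k) * (tc l i' j' : k) = 0 := by
      have : ∑ i, ∑ j, w i j * ∑ l, (sm i j l : k) * (tc l i' j' : k)
          = ∑ l, (∑ i, ∑ j, w i j * (sm i j l : k)) * (tc l i' j' : k) := by
        simp only [Finset.mul_sum, Finset.sum_mul, mul_assoc]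
        rw [Finset.sum_comm (s := (Finset.univ : Finset (Fin 7)))]
        refine Finset.sum_congr rfl fun i _ => ?_
        rw [Finset.sum_comm]
      rw [this]
      simp only [h0, zero_mul, Finset.sum_const_zero]
    have e3 : ∑ i, ∑ j, w i j * ∑ t, (lam t i j : k) * (zc t i' j' : k) = 0 := by
      have : ∑ i, ∑ j, w i j * ∑ t, (lam t i j : k) * (zc t i' j' : k)
          = ∑ t, (∑ i, ∑ j, (lam t i j : k) * w i j) * (zc t i' j' : k) := by
        simp only [Finset.mul_sum, Finset.sum_mul]
        rw [Finset.sum_comm (s := (Finset.univ : Finset (Fin 7)))]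
        refine Finset.sum_congr rfl fun i _ => ?_
        rw [Finset.sum_comm]
        refine Finset.sum_congr rfl fun i _ => Finset.sum_congr rfl fun j _ => ?_
        ring
      rw [this]
      simp only [h1', zero_mul, Finset.sum_const_zero]
    rw [e1]
    simp only [← hn, mul_add, Finset.sum_add_distrib, e2, e3, add_zero, Finset.sum_apply,
      Pi.smul_apply, smul_eq_mul]
  have hP : E1 e m ψ ∈ P := by
    rw [hw, key]
    exact P.sum_mem fun i _ => P.sum_mem fun j _ => P.smul_mem _ (hR i j)
  obtain ⟨φ, hφ⟩ := hP
  exact ⟨φ, E1_injective e m hφ⟩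

lemma finrank_of_functionals {V : Type*} [AddCommGroup V] [Module k V] (Z B : Submodule k V)
    (Λ : V →ₗ[k] (Fin 7 → k)) (h1 : ∀ b ∈ B, Λ b = 0)
    (h2 : ∀ t, ∃ z ∈ Z, Λ z = Pi.single t 1) (h3 : ∀ z ∈ Z, Λ z = 0 → z ∈ B) :
    Module.finrank k (↥Z ⧸ B.comap Z.subtype) = 7 := by
  have hk : B.comap Z.subtype = LinearMap.ker (Λ.comp Z.subtype) := by
    ext z
    simp only [Submodule.mem_comap, LinearMap.mem_ker, LinearMap.comp_apply]
    exact ⟨h1 _, h3 _ z.2⟩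
  have hs : Function.Surjective (Λ.comp Z.subtype) := by
    rw [← LinearMap.range_eq_top, eq_top_iff, ← (Pi.basisFun k (Fin 7)).span_eq,
      Submodule.span_le]
    rintro _ ⟨t, rfl⟩
    obtain ⟨z, hz, hz'⟩ := h2 t
    exact ⟨⟨z, hz⟩, by simpa using hz'⟩
  rw [hk, (LinearMap.quotKerEquivOfSurjective _ hs).finrank_eq]
  simp

theorem H7_abstract (e : Module.Basis (Fin 8) k g) (m : Module.Basis (Fin 7) k M)
    (hsc : ∀ a b c, e.repr ⁅e a, e b⁆ c = (sc a b c : k))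
    (hsm : ∀ a j l, m.repr ⁅e a, m j⁆ l = (sm a j l : k)) :
    Module.finrank k (ceH k g M 7) = 7 := by
  apply finrank_of_functionals _ _ (Lam e m)
  · intro b hb
    obtain ⟨φ, rfl⟩ := (mem_ceB_iff b).mp hb
    exact Lam_bdry e m hsc hsm φ
  · intro t
    refine ⟨J1 e m fun i j => (zc t i j : k), ?_, ?_⟩
    · rw [mem_ceZ_iff, ceL_J1 e m hsc hsm]
      intro l
      have := cast_zero_of_dvd (k := k) (num_z t l)
      push_cast at this
      exact this
    · ext s
      rw [Lam_apply, E1_J1]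
      have := cast_zero_of_dvd (k := k) (num_zlam t s)
      push_cast at this
      rw [sub_eq_zero] at this
      rw [this, Pi.single_apply]
  · intro z hz h
    rw [mem_ceZ_iff] at hz
    exact (mem_ceB_iff z).mpr (exact_part e m hsc hsm z hz h)

end Part4

section Part5

/-- Coordinates of a traceless matrix. -/
def cfun {R : Type*} [Ring R] (A : Matrix (Fin 3) (Fin 3) R) : Fin 8 → R :=
  ![A 0 1, A 0 2, A 1 0, A 1 2, A 2 0, A 2 1, A 0 0, - A 2 2]

/-- The standard basis over the integers. -/
def basZ : Fin 8 → Matrix (Fin 3) (Fin 3) ℤ :=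
  ![!![0, 1, 0; 0, 0, 0; 0, 0, 0], !![0, 0, 1; 0, 0, 0; 0, 0, 0],
    !![0, 0, 0; 1, 0, 0; 0, 0, 0], !![0, 0, 0; 0, 0, 1; 0, 0, 0],
    !![0, 0, 0; 0, 0, 0; 1, 0, 0], !![0, 0, 0; 0, 0, 0; 0, 1, 0],
    !![1, 0, 0; 0, -1, 0; 0, 0, 0], !![0, 0, 0; 0, 1, 0; 0, 0, -1]]

lemma num_sc : ∀ a b c : Fin 8, cfun (basZ a * basZ b - basZ b * basZ a) c = sc a b c := by
  decide +kernel

lemma num_bas_tr : ∀ a : Fin 8, (basZ a).trace = 0 := by decide +kernel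

lemma num_bas_coord : ∀ a c : Fin 8, cfun (basZ a) c = if c = a then 1 else 0 := by decide +kernel

variable (k : Type*) [Field k]

lemma sl3_trace (A : sl3 k) : A.1 0 0 + A.1 1 1 + A.1 2 2 = 0 := by
  have h : A.1.trace = 0 := A.2
  rwa [Matrix.trace_fin_three] at h

/-- The basis elements. -/
def eV (a : Fin 8) : sl3 k := ⟨(Int.castRingHom k).mapMatrix (basZ a), by
  change Matrix.trace ((Int.castRingHom k).mapMatrix (basZ a)) = 0
  have h := congrArg (Int.cast : ℤ → k) (num_bas_tr a)
  rw [Matrix.trace_fin_three] at h ⊢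
  simpa using h⟩

lemma cfun_map (A : Matrix (Fin 3) (Fin 3) ℤ) (c : Fin 8) :
    cfun ((Int.castRingHom k).mapMatrix A) c = ((cfun A c : ℤ) : k) := by
  fin_cases c <;> simp [cfun]

/-- Coordinates on `sl₃`. -/
def coordL : sl3 k →ₗ[k] (Fin 8 → k) where
  toFun A := cfun A.1
  map_add' A B := by
    ext c; fin_cases c <;> simp [cfun, add_comm]
  map_smul' r A := by
    ext c; fin_cases c <;> simp [cfun]

lemma coordL_inj : Function.Injective (coordL k) := by
  rw [injective_iff_map_eq_zero]
  intro A h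
  have h' : ∀ c, cfun A.1 c = 0 := fun c => congrFun h c
  have h0 := h' 0
  have h1 := h' 1
  have h2 := h' 2
  have h3 := h' 3
  have h4 := h' 4
  have h5 := h' 5
  have h6 := h' 6
  have h7 := h' 7
  have ht := sl3_trace k A
  simp [cfun] at h0 h1 h2 h3 h4 h5 h6 h7
  rw [h6, h7] at ht
  simp at ht
  ext i j
  fin_cases i <;> fin_cases j <;> simp [*]

lemma coordL_eV (a : Fin 8) : coordL k (eV k a) = Pi.single a 1 := by
  ext c
  change cfun ((Int.castRingHom k).mapMatrix (basZ a)) c = _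
  rw [cfun_map, num_bas_coord, Pi.single_apply]
  split_ifs <;> simp

lemma coordL_surj : Function.Surjective (coordL k) := by
  rw [← LinearMap.range_eq_top, eq_top_iff, ← (Pi.basisFun k (Fin 8)).span_eq, Submodule.span_le]
  rintro _ ⟨t, rfl⟩
  exact ⟨eV k t, by simp [coordL_eV]⟩

/-- The standard basis of `sl₃`. -/
noncomputable def eB : Module.Basis (Fin 8) k (sl3 k) :=
  Module.Basis.ofEquivFun (LinearEquiv.ofBijective (coordL k) ⟨coordL_inj k, coordL_surj k⟩)

lemma eB_repr (A : sl3 k) (c : Fin 8) : (eB k).repr A c = coordL k A c := by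
  simp [eB]
  rfl

lemma eB_apply (a : Fin 8) : eB k a = eV k a := by
  apply coordL_inj k
  rw [coordL_eV]
  ext c
  rw [← eB_repr]
  simp [Finsupp.single_apply, Pi.single_apply, eq_comm]

lemma eB_sc (a b c : Fin 8) : (eB k).repr ⁅eB k a, eB k b⁆ c = (sc a b c : k) := by
  rw [eB_repr, eB_apply, eB_apply]
  change cfun ((Int.castRingHom k).mapMatrix (basZ a) * (Int.castRingHom k).mapMatrix (basZ b)
    - (Int.castRingHom k).mapMatrix (basZ b) * (Int.castRingHom k).mapMatrix (basZ a)) c = _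
  rw [← map_mul, ← map_mul, ← map_sub, cfun_map, num_sc]

/-- Coordinates modulo the center. -/
def coordM : sl3 k →ₗ[k] (Fin 7 → k) where
  toFun A l := coordL k A l.castSucc + if l.val = 6 then coordL k A 7 else 0
  map_add' A B := by
    ext l; simp only [map_add, Pi.add_apply]; split_ifs <;> ring
  map_smul' r A := by
    ext l; simp only [map_smul, Pi.smul_apply, smul_eq_mul, RingHom.id_apply]; split_ifs <;> ring

lemma coordM_apply (A : sl3 k) (l : Fin 7) :
    coordM k A l = coordL k A l.castSucc + if l.val = 6 then coordL k A 7 else 0 := rfl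

lemma coordM_eV (j : Fin 7) : coordM k (eV k j.castSucc) = Pi.single j 1 := by
  ext l
  rw [coordM_apply, coordL_eV]
  fin_cases j <;> fin_cases l <;> simp [Pi.single_apply, Fin.ext_iff]

lemma coordM_surj : Function.Surjective (coordM k) := by
  rw [← LinearMap.range_eq_top, eq_top_iff, ← (Pi.basisFun k (Fin 7)).span_eq, Submodule.span_le]
  rintro _ ⟨t, rfl⟩
  exact ⟨eV k t.castSucc, by simp [coordM_eV]⟩

variable [CharP k 3]

lemma mem_center_iff (A : sl3 k) : A ∈ LieAlgebra.center k (sl3 k) ↔ coordM k A = 0 := by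
  have h3 : (3 : k) = 0 := by exact_mod_cast CharP.cast_eq_zero k 3
  have ht := sl3_trace k A
  rw [LieModule.mem_maxTrivSubmodule]
  constructor
  · intro h
    have hb : ∀ (a : Fin 8) (i j : Fin 3), ((eV k a).1 * A.1 - A.1 * (eV k a).1) i j = 0 := by
      intro a i j
      have := congrArg Subtype.val (h (eV k a))
      exact congrFun (congrFun this i) j
    have a0 := hb 6 0 1
    have a1 := hb 6 0 2
    have a2 := hb 6 1 0
    have a3 := hb 6 1 2
    have a4 := hb 6 2 0
    have a5 := hb 6 2 1
    have a6 := hb 0 0 1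
    simp [eV, basZ, Matrix.mul_apply, Fin.sum_univ_three] at a0 a1 a2 a3 a4 a5 a6
    have b0 : A.1 0 1 = 0 := by linear_combination - a0 + A.1 0 1 * h3
    have b2 : A.1 1 0 = 0 := by linear_combination a2 + A.1 1 0 * h3
    ext l
    rw [coordM_apply]
    change cfun A.1 l.castSucc + (if l.val = 6 then cfun A.1 7 else 0) = 0
    fin_cases l <;> simp [cfun, *]
    linear_combination - ht + a6 + A.1 0 0 * h3
  · intro h x
    have h' : ∀ l : Fin 7, cfun A.1 l.castSucc + (if l.val = 6 then cfun A.1 7 else 0) = 0 :=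
      fun l => congrFun h l
    have c0 := h' 0
    have c1 := h' 1
    have c2 := h' 2
    have c3 := h' 3
    have c4 := h' 4
    have c5 := h' 5
    have c6 := h' 6
    simp [cfun] at c0 c1 c2 c3 c4 c5 c6
    have d1 : A.1 2 2 = A.1 0 0 := by linear_combination - c6
    have d2 : A.1 1 1 = A.1 0 0 := by linear_combination ht + c6 - A.1 0 0 * h3
    have hA : A.1 = A.1 0 0 • (1 : Matrix (Fin 3) (Fin 3) k) := by
      ext i j
      fin_cases i <;> fin_cases j <;> simp [*]
    apply Subtype.ext
    rw [LieAlgebra.SpecialLinear.sl_bracket, hA]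
    simp

/-- Coordinates on the quotient module. -/
noncomputable def mE : sl3ModCenter k ≃ₗ[k] (Fin 7 → k) :=
  (Submodule.quotEquivOfEq (LieAlgebra.center k (sl3 k)).toSubmodule (LinearMap.ker (coordM k))
    (by ext A; exact mem_center_iff k A)).trans
    (LinearMap.quotKerEquivOfSurjective (coordM k) (coordM_surj k))

lemma mE_mk (A : sl3 k) : mE k (LieSubmodule.Quotient.mk A) = coordM k A := rfl

/-- The basis of the quotient module. -/
noncomputable def mB : Module.Basis (Fin 7) k (sl3ModCenter k) := Module.Basis.ofEquivFun (mE k)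

lemma mB_apply (j : Fin 7) : mB k j = LieSubmodule.Quotient.mk (eV k j.castSucc) := by
  apply (mE k).injective
  rw [mE_mk, coordM_eV]
  simp [mB]

lemma mB_sm (a : Fin 8) (j l : Fin 7) : (mB k).repr ⁅eB k a, mB k j⁆ l = (sm a j l : k) := by
  have h : (mB k).repr ⁅eB k a, mB k j⁆ l = mE k ⁅eB k a, mB k j⁆ l := by simp [mB]
  rw [h, mB_apply, ← eB_apply]
  change mE k (LieSubmodule.Quotient.mk ⁅eB k a, eB k j.castSucc⁆) l = _
  rw [mE_mk, coordM_apply, ← eB_repr, ← eB_repr, eB_sc, eB_sc, sm]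
  split_ifs <;> simp [sc]

end Part5

theorem H7_quotient_module_dim (k : Type*) [Field k] [IsAlgClosed k] [CharP k 3] :
    Module.finrank k (ceH k (sl3 k) (sl3ModCenter k) 7) = 7 := by
  exact H7_abstract (eB k) (mB k) (eB_sc k) (mB_sm k)
end

section
/- Let k be an algebraically closed field of characteristic 3 and let g = sl_3(k) be the Lie algebra of traceless 3×3 matrices over k. Then dim_k H^1(g, g) = 1; equivalently, the quotient of the space of derivations of g by the subspace of inner derivations (those of the form ad x for x ∈ g) is one-dimensional over k. -/
set_option linter.unusedSimpArgs false
set_option linter.unusedTactic false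

set_option maxHeartbeats 4000000 in
theorem key (k : Type*) [Field k] [CharP k 3] (d : Matrix (Fin 3) (Fin 3) k → Matrix (Fin 3) (Fin 3) k)
  (hadd : ∀ x y, x.trace = 0 → y.trace = 0 → d (x + y) = d x + d y)
  (hsm : ∀ (c : k) x, x.trace = 0 → d (c • x) = c • d x)
  (hL : ∀ x y, x.trace = 0 → y.trace = 0 → d (x * y - y * x) = d x * y - y * d x + (x * d y - d y * x))
  (ht : ∀ x, x.trace = 0 → (d x).trace = 0) :
  ∃ A, ∀ x, x.trace = 0 → d x = A * x - x * A := by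
  have h3 : (3 : k) = 0 := by exact_mod_cast CharP.cast_eq_zero k 3
  obtain ⟨e12, h12⟩ : ∃ x : Matrix (Fin 3) (Fin 3) k, x = !![0,1,0;0,0,0;0,0,0] := ⟨_, rfl⟩
  obtain ⟨e13, h13⟩ : ∃ x : Matrix (Fin 3) (Fin 3) k, x = !![0,0,1;0,0,0;0,0,0] := ⟨_, rfl⟩
  obtain ⟨e21, h21⟩ : ∃ x : Matrix (Fin 3) (Fin 3) k, x = !![0,0,0;1,0,0;0,0,0] := ⟨_, rfl⟩
  obtain ⟨e23, h23⟩ : ∃ x : Matrix (Fin 3) (Fin 3) k, x = !![0,0,0;0,0,1;0,0,0] := ⟨_, rfl⟩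
  obtain ⟨e31, h31⟩ : ∃ x : Matrix (Fin 3) (Fin 3) k, x = !![0,0,0;0,0,0;1,0,0] := ⟨_, rfl⟩
  obtain ⟨e32, h32⟩ : ∃ x : Matrix (Fin 3) (Fin 3) k, x = !![0,0,0;0,0,0;0,1,0] := ⟨_, rfl⟩
  obtain ⟨h, hh⟩ : ∃ x : Matrix (Fin 3) (Fin 3) k, x = !![1,0,0;0,-1,0;0,0,0] := ⟨_, rfl⟩
  obtain ⟨g, hg⟩ : ∃ x : Matrix (Fin 3) (Fin 3) k, x = !![0,0,0;0,1,0;0,0,-1] := ⟨_, rfl⟩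
  have t12 : e12.trace = 0 := by simp [h12, Matrix.trace, Fin.sum_univ_three]
  have t13 : e13.trace = 0 := by simp [h13, Matrix.trace, Fin.sum_univ_three]
  have t21 : e21.trace = 0 := by simp [h21, Matrix.trace, Fin.sum_univ_three]
  have t23 : e23.trace = 0 := by simp [h23, Matrix.trace, Fin.sum_univ_three]
  have t31 : e31.trace = 0 := by simp [h31, Matrix.trace, Fin.sum_univ_three]
  have t32 : e32.trace = 0 := by simp [h32, Matrix.trace, Fin.sum_univ_three]
  have th : h.trace = 0 := by simp [hh, Matrix.trace, Fin.sum_univ_three]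
  have tg : g.trace = 0 := by simp [hg, Matrix.trace, Fin.sum_univ_three]
  -- Leibniz with a named bracket
  have hL' : ∀ x y c z, x.trace = 0 → y.trace = 0 → z.trace = 0 → x * y - y * x = c • z →
      ∀ i j, c * d z i j = (d x * y - y * d x + (x * d y - d y * x)) i j := by
    intro x y c z hx hy hz hb i j
    rw [← hL x y hx hy, hb, hsm c z hz]; simp
  -- reduce to a basis
  suffices hs : ∃ A, d e12 = A * e12 - e12 * A ∧ d e13 = A * e13 - e13 * A ∧
      d e21 = A * e21 - e21 * A ∧ d e23 = A * e23 - e23 * A ∧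
      d e31 = A * e31 - e31 * A ∧ d e32 = A * e32 - e32 * A ∧
      d h = A * h - h * A ∧ d g = A * g - g * A by
    obtain ⟨A, a1, a2, a3, a4, a5, a6, a7, a8⟩ := hs
    refine ⟨A, fun x hx => ?_⟩
    have hx' : x = x 0 1 • e12 + (x 0 2 • e13 + (x 1 0 • e21 + (x 1 2 • e23 + (x 2 0 • e31 +
        (x 2 1 • e32 + (x 0 0 • h + (-x 2 2) • g)))))) := by
      have := hx
      rw [Matrix.trace_fin_three] at this
      ext i j
      fin_cases i <;> fin_cases j <;> simp [h12, h13, h21, h23, h31, h32, hh, hg]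
      linear_combination this
    have hd : d x = x 0 1 • d e12 + (x 0 2 • d e13 + (x 1 0 • d e21 + (x 1 2 • d e23 + (x 2 0 • d e31 +
        (x 2 1 • d e32 + (x 0 0 • d h + (-x 2 2) • d g)))))) := by
      conv_lhs => rw [hx']
      simp only [hadd, hsm, Matrix.trace_add, Matrix.trace_smul, t12, t13, t21, t23, t31, t32, th, tg,
        smul_zero, add_zero]
    rw [hd, a1, a2, a3, a4, a5, a6, a7, a8]
    conv_rhs => rw [hx']
    simp only [mul_add, add_mul, smul_sub, Matrix.mul_smul, Matrix.smul_mul]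
    abel
  -- entries of d e as scalars
  have T := fun x hx => (Matrix.trace_fin_three (d x)).symm.trans (ht x hx)
  have T1 := T _ t12
  have T2 := T _ t13
  have T3 := T _ t21
  have T4 := T _ t23
  have T5 := T _ t31
  have T6 := T _ t32
  have T7 := T _ th
  have T8 := T _ tg
  have r1 := hL' h g 0 h th tg th (by ext i j; fin_cases i <;> fin_cases j <;> simp [hh, hg, Matrix.vecMul, dotProduct, Fin.sum_univ_three] <;> norm_num)
  have b1 := hL' h e12 2 e12 th t12 t12 (by ext i j; fin_cases i <;> fin_cases j <;> simp [hh, h12, Matrix.vecMul, dotProduct, Fin.sum_univ_three] <;> norm_num)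
  have b2 := hL' h e23 (-1) e23 th t23 t23 (by ext i j; fin_cases i <;> fin_cases j <;> simp [hh, h23, Matrix.vecMul, dotProduct, Fin.sum_univ_three] <;> norm_num)
  have b3 := hL' h e13 1 e13 th t13 t13 (by ext i j; fin_cases i <;> fin_cases j <;> simp [hh, h13, Matrix.vecMul, dotProduct, Fin.sum_univ_three] <;> norm_num)
  have b4 := hL' h e21 (-2) e21 th t21 t21 (by ext i j; fin_cases i <;> fin_cases j <;> simp [hh, h21, Matrix.vecMul, dotProduct, Fin.sum_univ_three] <;> norm_num)
  have b5 := hL' h e32 1 e32 th t32 t32 (by ext i j; fin_cases i <;> fin_cases j <;> simp [hh, h32, Matrix.vecMul, dotProduct, Fin.sum_univ_three] <;> norm_num)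
  have b6 := hL' h e31 (-1) e31 th t31 t31 (by ext i j; fin_cases i <;> fin_cases j <;> simp [hh, h31, Matrix.vecMul, dotProduct, Fin.sum_univ_three] <;> norm_num)
  have b7 := hL' g e12 (-1) e12 tg t12 t12 (by ext i j; fin_cases i <;> fin_cases j <;> simp [hg, h12, Matrix.vecMul, dotProduct, Fin.sum_univ_three] <;> norm_num)
  have b8 := hL' g e23 2 e23 tg t23 t23 (by ext i j; fin_cases i <;> fin_cases j <;> simp [hg, h23, Matrix.vecMul, dotProduct, Fin.sum_univ_three] <;> norm_num)
  have b9 := hL' g e13 1 e13 tg t13 t13 (by ext i j; fin_cases i <;> fin_cases j <;> simp [hg, h13, Matrix.vecMul, dotProduct, Fin.sum_univ_three] <;> norm_num)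
  have b10 := hL' g e21 1 e21 tg t21 t21 (by ext i j; fin_cases i <;> fin_cases j <;> simp [hg, h21, Matrix.vecMul, dotProduct, Fin.sum_univ_three] <;> norm_num)
  have b11 := hL' g e32 (-2) e32 tg t32 t32 (by ext i j; fin_cases i <;> fin_cases j <;> simp [hg, h32, Matrix.vecMul, dotProduct, Fin.sum_univ_three] <;> norm_num)
  have b12 := hL' g e31 (-1) e31 tg t31 t31 (by ext i j; fin_cases i <;> fin_cases j <;> simp [hg, h31, Matrix.vecMul, dotProduct, Fin.sum_univ_three] <;> norm_num)
  have c1 := hL' e12 e21 1 h t12 t21 th (by ext i j; fin_cases i <;> fin_cases j <;> simp [h12, h21, hh, Matrix.vecMul, dotProduct, Fin.sum_univ_three] <;> norm_num)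
  have c2 := hL' e23 e32 1 g t23 t32 tg (by ext i j; fin_cases i <;> fin_cases j <;> simp [h23, h32, hg, Matrix.vecMul, dotProduct, Fin.sum_univ_three] <;> norm_num)
  have c3 := hL' e12 e23 1 e13 t12 t23 t13 (by ext i j; fin_cases i <;> fin_cases j <;> simp [h12, h23, h13, Matrix.vecMul, dotProduct, Fin.sum_univ_three] <;> norm_num)
  have c4 := hL' e32 e21 1 e31 t32 t21 t31 (by ext i j; fin_cases i <;> fin_cases j <;> simp [h32, h21, h31, Matrix.vecMul, dotProduct, Fin.sum_univ_three] <;> norm_num)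
  have c5 := hL' e12 e31 (-1) e32 t12 t31 t32 (by ext i j; fin_cases i <;> fin_cases j <;> simp [h12, h31, h32, Matrix.vecMul, dotProduct, Fin.sum_univ_three] <;> norm_num)
  have c6 := hL' e23 e31 1 e21 t23 t31 t21 (by ext i j; fin_cases i <;> fin_cases j <;> simp [h23, h31, h21, Matrix.vecMul, dotProduct, Fin.sum_univ_three] <;> norm_num)
  have c7 := hL' e13 e32 1 e12 t13 t32 t12 (by ext i j; fin_cases i <;> fin_cases j <;> simp [h13, h32, h12, Matrix.vecMul, dotProduct, Fin.sum_univ_three] <;> norm_num)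
  have c8 := hL' e13 e21 (-1) e23 t13 t21 t23 (by ext i j; fin_cases i <;> fin_cases j <;> simp [h13, h21, h23, Matrix.vecMul, dotProduct, Fin.sum_univ_three] <;> norm_num)
  have c9 := hL' e12 e13 0 e12 t12 t13 t12 (by ext i j; fin_cases i <;> fin_cases j <;> simp [h12, h13, Matrix.vecMul, dotProduct, Fin.sum_univ_three] <;> norm_num)
  have c10 := hL' e12 e32 0 e12 t12 t32 t12 (by ext i j; fin_cases i <;> fin_cases j <;> simp [h12, h32, Matrix.vecMul, dotProduct, Fin.sum_univ_three] <;> norm_num)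
  have c11 := hL' e21 e23 0 e12 t21 t23 t12 (by ext i j; fin_cases i <;> fin_cases j <;> simp [h21, h23, Matrix.vecMul, dotProduct, Fin.sum_univ_three] <;> norm_num)
  have c12 := hL' e21 e31 0 e12 t21 t31 t12 (by ext i j; fin_cases i <;> fin_cases j <;> simp [h21, h31, Matrix.vecMul, dotProduct, Fin.sum_univ_three] <;> norm_num)
  have c13 := hL' e13 e23 0 e12 t13 t23 t12 (by ext i j; fin_cases i <;> fin_cases j <;> simp [h13, h23, Matrix.vecMul, dotProduct, Fin.sum_univ_three] <;> norm_num)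
  have c14 := hL' e31 e32 0 e12 t31 t32 t12 (by ext i j; fin_cases i <;> fin_cases j <;> simp [h31, h32, Matrix.vecMul, dotProduct, Fin.sum_univ_three] <;> norm_num)
  generalize d e12 = m1 at *
  generalize d e13 = m2 at *
  generalize d e21 = m3 at *
  generalize d e23 = m4 at *
  generalize d e31 = m5 at *
  generalize d e32 = m6 at *
  generalize d h = m7 at *
  generalize d g = m8 at *
  clear hL' hL T hadd hsm ht
  subst h12 h13 h21 h23 h31 h32 hh hg
  simp [Fin.forall_fin_succ, Matrix.mul_apply, Matrix.vecMul, dotProduct, Fin.sum_univ_three] at r1 b1 b2 b3 b4 b5 b6 b7 b8 b9 b10 b11 b12 c1 c2 c3 c4 c5 c6 c7 c8 c9 c10 c11 c12 c13 c14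
  refine ⟨!![m2 0 2, m4 0 2, m6 0 1; m2 1 2, m4 1 2, m6 1 1; m2 2 2, m4 2 2, 0], ?_⟩
  simp only [← Matrix.ext_iff, Fin.forall_fin_succ]
  simp [Matrix.mul_apply, Fin.sum_univ_three]
  refine ⟨?_, ?_, ?_, ?_, ?_, ?_, ?_, ?_⟩ <;> (repeat' apply And.intro) <;> grind

open Matrix in
lemma sl3_mem_iff (k : Type*) [Field k] (x : Matrix (Fin 3) (Fin 3) k) :
    x ∈ LieAlgebra.SpecialLinear.sl (Fin 3) k ↔ x.trace = 0 := Iff.rfl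

lemma sl3_coe_add (k : Type*) [Field k] (x y : sl3 k) :
    ((x + y : sl3 k) : Matrix (Fin 3) (Fin 3) k) = x.1 + y.1 := rfl

lemma sl3_coe_sub (k : Type*) [Field k] (x y : sl3 k) :
    ((x - y : sl3 k) : Matrix (Fin 3) (Fin 3) k) = x.1 - y.1 := rfl

lemma sl3_coe_smul (k : Type*) [Field k] (c : k) (x : sl3 k) :
    ((c • x : sl3 k) : Matrix (Fin 3) (Fin 3) k) = c • x.1 := rfl

/-- The outer derivation `ad E₁₁`. -/
noncomputable def outerD (k : Type*) [Field k] : LieDerivation k (sl3 k) (sl3 k) where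
  toFun x := ⟨Matrix.single 0 0 1 * (x : Matrix (Fin 3) (Fin 3) k) - (x : Matrix (Fin 3) (Fin 3) k) * Matrix.single 0 0 1, by
    rw [sl3_mem_iff, Matrix.trace_sub, Matrix.trace_mul_comm, sub_self]⟩
  map_add' x y := by
    apply Subtype.ext
    simp [mul_add, add_mul]; abel
  map_smul' c x := by
    apply Subtype.ext
    simp [smul_sub]
  leibniz' a b := by
    apply Subtype.ext
    simp only [LinearMap.coe_mk, AddHom.coe_mk, LieAlgebra.SpecialLinear.sl_bracket,
      sl3_coe_sub]
    noncomm_ring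

lemma outerD_coe (k : Type*) [Field k] (x : sl3 k) :
    ((outerD k x : sl3 k) : Matrix (Fin 3) (Fin 3) k) =
      Matrix.single 0 0 1 * (x : Matrix (Fin 3) (Fin 3) k)
        - (x : Matrix (Fin 3) (Fin 3) k) * Matrix.single 0 0 1 := rfl

lemma outerD_not_inner (k : Type*) [Field k] [CharP k 3] (x : sl3 k)
    (hx : ∀ y, outerD k y = ⁅x, y⁆) : False := by
  have h3 : (3 : k) = 0 := by exact_mod_cast CharP.cast_eq_zero k 3
  have hx' : ∀ y : Matrix (Fin 3) (Fin 3) k, y.trace = 0 →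
      Matrix.single 0 0 1 * y - y * Matrix.single 0 0 1 =
        (x : Matrix (Fin 3) (Fin 3) k) * y - y * (x : Matrix (Fin 3) (Fin 3) k) := by
    intro y hy
    have := congrArg Subtype.val (hx ⟨y, hy⟩)
    rwa [outerD_coe, LieAlgebra.SpecialLinear.sl_bracket] at this
  have ht : (x : Matrix (Fin 3) (Fin 3) k).trace = 0 := x.2
  rw [Matrix.trace_fin_three] at ht
  have e1 := congrFun (congrFun (hx' (Matrix.single 0 1 1) (by simp)) 0) 1
  have e2 := congrFun (congrFun (hx' (Matrix.single 1 2 1) (by simp)) 1) 2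
  simp [Matrix.mul_apply, Fin.sum_univ_three, Matrix.single_apply] at e1 e2
  have : (1 : k) = 0 := by
    linear_combination ht + e1 - e2 - h3 * (x : Matrix (Fin 3) (Fin 3) k) 1 1 + h3 * 0
  exact one_ne_zero this

lemma der_decomp (k : Type*) [Field k] [CharP k 3] (f : sl3 k →ₗ[k] sl3 k)
    (hf : ∀ a b, f ⁅a, b⁆ = ⁅a, f b⁆ - ⁅b, f a⁆) :
    ∃ (c : k) (x : sl3 k), ∀ y, f y = c • outerD k y + ⁅x, y⁆ := by
  classical
  obtain ⟨A, hA⟩ := key k (fun x => if h : x.trace = 0 then (f ⟨x, h⟩ : Matrix (Fin 3) (Fin 3) k) else 0)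
    (by
      intro x y hx hy
      have hxy : (x + y).trace = 0 := by rw [Matrix.trace_add, hx, hy, add_zero]
      simp only [hx, hy, hxy, dif_pos]
      rw [← sl3_coe_add, ← map_add]; rfl)
    (by
      intro c x hx
      have hcx : (c • x).trace = 0 := by rw [Matrix.trace_smul, hx, smul_zero]
      simp only [hx, hcx, dif_pos]
      rw [← sl3_coe_smul, ← map_smul]; rfl)
    (by
      intro x y hx hy
      have hxy : (x * y - y * x).trace = 0 := by
        rw [Matrix.trace_sub, Matrix.trace_mul_comm, sub_self]
      simp only [hx, hy, hxy, dif_pos]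
      have := congrArg Subtype.val (hf ⟨x, hx⟩ ⟨y, hy⟩)
      rw [sl3_coe_sub, LieAlgebra.SpecialLinear.sl_bracket,
        LieAlgebra.SpecialLinear.sl_bracket] at this
      refine Eq.trans ?_ (this.trans ?_)
      · rfl
      · simp only []; abel)
    (by
      intro x hx
      simp only [hx, dif_pos]
      exact (f ⟨x, hx⟩).2)
  refine ⟨A.trace, ⟨A - A.trace • Matrix.single 0 0 1, ?_⟩, fun y => ?_⟩
  · rw [sl3_mem_iff, Matrix.trace_sub, Matrix.trace_smul, Matrix.trace_single_eq_same]; simp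
  · have := hA y.1 y.2
    rw [dif_pos (show y.1.trace = 0 from y.2)] at this
    apply Subtype.ext
    rw [sl3_coe_add, sl3_coe_smul, outerD_coe,
      LieAlgebra.SpecialLinear.sl_bracket]
    refine Eq.trans this ?_
    simp only [sub_mul, mul_sub, smul_sub, Matrix.smul_mul, Matrix.mul_smul]
    abel

lemma ceD_one (k : Type*) [Field k] (ψ : (sl3 k) [⋀^Fin 1]→ₗ[k] (sl3 k)) (v : Fin 2 → sl3 k) :
    ceD k (sl3 k) (sl3 k) ψ v =
      - ψ ![⁅v 0, v 1⁆] + (⁅v 0, ψ ![v 1]⁆ - ⁅v 1, ψ ![v 0]⁆) := by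
  have e0 : ∀ w : Fin 1 → sl3 k, w = ![w 0] := fun w => by
    funext i; rw [Subsingleton.elim i 0]; rfl
  have s0 : (fun l : Fin 1 => v (Fin.succAbove 0 l)) = ![v 1] := e0 _
  have s1 : (fun l : Fin 1 => v (Fin.succAbove 1 l)) = ![v 0] := e0 _
  have s2 : ∀ w : Fin 0 → sl3 k, (Fin.cons ⁅v 0, v 1⁆ w : Fin 1 → sl3 k) = ![⁅v 0, v 1⁆] :=
    fun w => e0 _
  have s0' : (fun l : Fin 1 => v l.succ) = ![v 1] := e0 _
  have s3 : ψ (fun l : Fin 1 => v (Fin.succAbove 1 l)) = ψ ![v 0] := congrArg ψ s1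
  have s4 : ψ (fun l : Fin 1 => v l.succ) = ψ ![v 1] := congrArg ψ s0'
  simp only [ceD]
  simp [s2, sub_eq_add_neg]
  erw [s3, s4]

theorem H1_adjoint_dim_outer_derivations (k : Type*) [Field k] [IsAlgClosed k] [CharP k 3] :
    Module.finrank k (ceH k (sl3 k) (sl3 k) 1) = 1 ∧
      Module.finrank k
        (LieDerivation k (sl3 k) (sl3 k) ⧸
          LinearMap.range (LieDerivation.ad k (sl3 k)).toLinearMap) = 1 := by
  have e0 : ∀ w : Fin 1 → sl3 k, w = ![w 0] := fun w => by
    funext i; rw [Subsingleton.elim i 0]; rfl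
  constructor
  · let ψ₀ : (sl3 k) [⋀^Fin 1]→ₗ[k] (sl3 k) :=
      AlternatingMap.ofSubsingleton k (sl3 k) (sl3 k) (0 : Fin 1) (outerD k).toLinearMap
    have hψ₀ : ∀ y, ψ₀ ![y] = outerD k y := fun y => rfl
    have hz : ψ₀ ∈ ceZ k (sl3 k) (sl3 k) 1 := by
      intro v
      rw [ceD_one, hψ₀, hψ₀, hψ₀, LieDerivation.apply_lie_eq_sub]
      abel
    refine finrank_eq_one (Submodule.Quotient.mk ⟨ψ₀, hz⟩) ?_ ?_
    · intro h
      rw [Submodule.Quotient.mk_eq_zero] at h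
      obtain ⟨φ, hφ⟩ := h
      refine outerD_not_inner k (-(φ ![])) fun y => ?_
      have := hφ ![y]
      rw [neg_lie, lie_skew]
      exact this
    · intro w
      obtain ⟨⟨ψ, hψ⟩, rfl⟩ := Submodule.Quotient.mk_surjective _ w
      obtain ⟨c, x, hcx⟩ := der_decomp k
        ((AlternatingMap.ofSubsingleton k (sl3 k) (sl3 k) (0 : Fin 1)).symm ψ) (by
          intro a b
          have := hψ ![a, b]
          rw [ceD_one] at this
          have h2 : ∀ y, ((AlternatingMap.ofSubsingleton k (sl3 k) (sl3 k) (0 : Fin 1)).symm ψ) y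
              = ψ ![y] := fun y => congrArg ψ (e0 _)
          rw [h2, h2, h2]
          exact (neg_add_eq_zero.mp this))
      have h2 : ∀ y, ψ ![y] = c • outerD k y + ⁅x, y⁆ := fun y => by
        rw [← hcx y]; exact (congrArg ψ (e0 (fun _ => y))).symm
      refine ⟨c, ?_⟩
      rw [← Submodule.Quotient.mk_smul, Submodule.Quotient.eq]
      refine ⟨AlternatingMap.constOfIsEmpty k (sl3 k) (Fin 0) x, fun v => ?_⟩
      rw [e0 v]
      change c • ψ₀ ![v 0] - ψ ![v 0] = ⁅v 0, x⁆
      rw [h2, hψ₀, ← lie_skew]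
      abel
  · refine finrank_eq_one (Submodule.Quotient.mk (outerD k)) ?_ ?_
    · intro h
      rw [Submodule.Quotient.mk_eq_zero] at h
      obtain ⟨x, hx⟩ := h
      exact outerD_not_inner k x fun y => by
        rw [← LieDerivation.ad_apply_apply k (sl3 k) x y]
        exact (congrArg (fun D : LieDerivation k (sl3 k) (sl3 k) => D y) hx).symm
    · intro w
      obtain ⟨D, rfl⟩ := Submodule.Quotient.mk_surjective _ w
      obtain ⟨c, x, hcx⟩ := der_decomp k D.toLinearMap D.leibniz'
      refine ⟨c, ?_⟩
      rw [← Submodule.Quotient.mk_smul, Submodule.Quotient.eq]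
      refine ⟨-x, ?_⟩
      ext1 y
      have h2 : D y = c • outerD k y + ⁅x, y⁆ := hcx y
      refine (LieDerivation.ad_apply_apply k (sl3 k) (-x) y).trans ?_
      change ⁅-x, y⁆ = c • outerD k y - D y
      rw [h2, neg_lie]
      abel
end
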